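/- Monotonicity of the maximal difference. Under the assumptions of the Strong Maximum Principle (Ω ⊂ ℝ^N bounded of class W^{2,∞}; H coercive satisfying (H0') and (He'') with m > 1; (M), (J0), (J1), (E'); iterative covering property), let u, v be bounded viscosity sub- and supersolutions of ∂_t u − I[u(·,t)](x) + H(x,Du) = 0 in Ω×(0,∞) with generalized Neumann condition on ∂Ω×(0,∞), and define k(t) = max_{cl(Ω)}(u(·,t) − v(·,t)) for t ∈ [0,∞). Then k(t) ≤ k(s) for all 0 ≤ s ≤ t. -/

import Mathlib

set_option autoImplicit false

/- Common framework for censored nonlocal Hamilton–Jacobi equations with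
Neumann boundary conditions (Barles-type viscosity solutions). -/

open Set Metric MeasureTheory Filter Topology Function
open scoped RealInnerProductSpace NNReal ENNReal

noncomputable section

namespace Censored

abbrev Euc (N : ℕ) : Type := EuclideanSpace ℝ (Fin N)

variable {N : ℕ}

/-- Signed distance to the boundary of `Ω`, positive inside `Ω`. -/
def sdist (Ω : Set (Euc N)) (x : Euc N) : ℝ := infDist x Ωᶜ - infDist x Ω

/-- A modulus of continuity. -/
def IsModulus (ω : ℝ → ℝ) : Prop :=
  (∀ s, 0 ≤ ω s) ∧ Monotone ω ∧ Tendsto ω (nhdsWithin 0 (Ioi 0)) (nhds 0)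

/-- A `W^{2,∞}` boundary chart for `Ω` at `s`, with radius `r`: a diffeomorphism of
class `W^{2,∞}` (i.e. `C^1` with Lipschitz differential, with inverse of the same
regularity) whose `N`-th component coincides with the signed distance. -/
def IsW2Chart (hN : 0 < N) (Ω : Set (Euc N)) (s : Euc N) (r : ℝ)
    (ψ ψinv : Euc N → Euc N) : Prop :=
  0 < r ∧
  ContDiffOn ℝ 1 ψ (ball s r) ∧
  (∃ L : ℝ≥0, LipschitzOnWith L (fun x => fderiv ℝ ψ x) (ball s r)) ∧
  ContDiffOn ℝ 1 ψinv (ψ '' ball s r) ∧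
  (∃ L : ℝ≥0, LipschitzOnWith L (fun x => fderiv ℝ ψinv x) (ψ '' ball s r)) ∧
  (∀ x ∈ ball s r, ψinv (ψ x) = x) ∧
  (∀ x ∈ ball s r, ψ x ⟨N - 1, Nat.sub_lt hN Nat.one_pos⟩ = sdist Ω x)

/-- Assumption (O): `Ω` is open of class `W^{2,∞}`. -/
def IsW2Domain (hN : 0 < N) (Ω : Set (Euc N)) : Prop :=
  IsOpen Ω ∧ ∀ s ∈ frontier Ω, ∃ r ψ ψinv, IsW2Chart hN Ω s r ψ ψinv

/-- `n` is the exterior unit normal vector field to `∂Ω`:  `n = -D d` where `d` is the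
signed distance (positive inside). -/
def IsExteriorNormal (Ω : Set (Euc N)) (n : Euc N → Euc N) : Prop :=
  ∀ x ∈ frontier Ω, ‖n x‖ = 1 ∧ HasGradientAt (sdist Ω) (-(n x)) x

/-- First part of assumption (M): the measures `μ_x` have a (measurable, nonnegative)
density `g x` with respect to Lebesgue measure, bounded by `Cμ |z|^{-(N+σ)}`. -/
def AssumptionM1 (Ω : Set (Euc N)) (g : Euc N → Euc N → ℝ) (Cμ σ : ℝ) : Prop :=
  0 < Cμ ∧ σ ∈ Ioo (0:ℝ) 1 ∧ (∀ x, Measurable (g x)) ∧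
  (∀ x ∈ closure Ω, ∀ z : Euc N, 0 ≤ g x z) ∧
  (∀ x ∈ closure Ω, ∀ z : Euc N, g x z ≤ Cμ * ‖z‖ ^ (-((N : ℝ) + σ)))

/-- Assumption (M). -/
def AssumptionM (Ω : Set (Euc N)) (g : Euc N → Euc N → ℝ) (Cμ Dμ σ : ℝ) : Prop :=
  AssumptionM1 Ω g Cμ σ ∧ 0 < Dμ ∧
  (∀ x ∈ closure Ω, ∀ y ∈ closure Ω, ∀ z : Euc N,
    |g x z - g y z| ≤ Dμ * ‖x - y‖ * ‖z‖ ^ (-((N : ℝ) + σ)))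

/-- Assumption (J0). -/
def AssumptionJ0 (Ω : Set (Euc N)) (j : Euc N → Euc N → Euc N) (Aj : ℝ) : Prop :=
  ∀ x ∈ closure Ω,
    ContDiff ℝ 1 (j x) ∧ Function.Bijective (j x) ∧
    ContDiff ℝ 1 (Function.invFun (j x)) ∧
    ∀ z : Euc N, ‖fderiv ℝ (Function.invFun (j x)) z‖ ≤ Aj

/-- Assumption (J1). -/
def AssumptionJ1 (Ω : Set (Euc N)) (j : Euc N → Euc N → Euc N) (Cj' Cj Dj : ℝ) : Prop :=
  0 < Cj' ∧ 0 < Cj ∧ 0 < Dj ∧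
  (∀ x ∈ closure Ω, ∀ z : Euc N, Cj' * ‖z‖ ≤ ‖j x z‖ ∧ ‖j x z‖ ≤ Cj * ‖z‖) ∧
  (∀ x ∈ closure Ω, ∀ y ∈ closure Ω, ∀ z : Euc N, ‖j x z - j y z‖ ≤ Dj * ‖z‖ * ‖x - y‖)

/-- The truncated censored nonlocal term over `{|z| ≥ ξ}` (`I^ξ`). -/
def Iout (Ω : Set (Euc N)) (j : Euc N → Euc N → Euc N) (g : Euc N → Euc N → ℝ)
    (ξ : ℝ) (u : Euc N → ℝ) (x : Euc N) : ℝ :=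
  ∫ z in {z : Euc N | ξ ≤ ‖z‖ ∧ x + j x z ∈ closure Ω}, (u (x + j x z) - u x) * g x z

/-- The truncated censored nonlocal term over `{|z| < ξ}` (`I_ξ`). -/
def Iin (Ω : Set (Euc N)) (j : Euc N → Euc N → Euc N) (g : Euc N → Euc N → ℝ)
    (ξ : ℝ) (φ : Euc N → ℝ) (x : Euc N) : ℝ :=
  ∫ z in {z : Euc N | ‖z‖ < ξ ∧ x + j x z ∈ closure Ω}, (φ (x + j x z) - φ x) * g x z

/-- The censored nonlocal operator of order `σ < 1`, as a principal value. -/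
def Ipv (Ω : Set (Euc N)) (j : Euc N → Euc N → Euc N) (g : Euc N → Euc N → ℝ)
    (u : Euc N → ℝ) (x : Euc N) : ℝ :=
  limUnder (nhdsWithin (0:ℝ) (Ioi 0)) (fun δ =>
    ∫ z in {z : Euc N | δ < ‖z‖ ∧ x + j x z ∈ closure Ω}, (u (x + j x z) - u x) * g x z)

/-- `u` is bounded on `S`. -/
def BddOn (u : Euc N → ℝ) (S : Set (Euc N)) : Prop := ∃ M, ∀ x ∈ S, |u x| ≤ M

/-- `u = u(x,t)` is bounded on `S × I`. -/
def BddOnT (u : Euc N → ℝ → ℝ) (S : Set (Euc N)) (I : Set ℝ) : Prop :=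
  ∃ M, ∀ x ∈ S, ∀ t ∈ I, |u x t| ≤ M

/-- Viscosity subsolution, with generalized Neumann boundary conditions, of the
stationary equation `F(x, u, Du, I[u]) = 0` in `Ω`, `∂u/∂n = 0` on `∂Ω`,
for the censored operator determined by `j, g` (with constant `Cj` from (J1)). -/
def IsSubSol (Ω : Set (Euc N)) (j : Euc N → Euc N → Euc N) (g : Euc N → Euc N → ℝ)
    (n : Euc N → Euc N) (Cj : ℝ) (F : Euc N → ℝ → Euc N → ℝ → ℝ) (u : Euc N → ℝ) : Prop :=
  ∀ ξ > (0:ℝ), ∀ φ : Euc N → ℝ, ContDiff ℝ 1 φ →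
    ∀ x ∈ closure Ω,
      (∀ y ∈ closedBall x (Cj * ξ) ∩ closure Ω, u y - φ y ≤ u x - φ x) →
      (x ∈ Ω → F x (u x) (gradient φ x) (Iin Ω j g ξ φ x + Iout Ω j g ξ u x) ≤ 0) ∧
      (x ∈ frontier Ω →
        min (F x (u x) (gradient φ x) (Iin Ω j g ξ φ x + Iout Ω j g ξ u x))
          ⟪gradient φ x, n x⟫ ≤ 0)

/-- Viscosity supersolution, with generalized Neumann boundary conditions. -/
def IsSuperSol (Ω : Set (Euc N)) (j : Euc N → Euc N → Euc N) (g : Euc N → Euc N → ℝ)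
    (n : Euc N → Euc N) (Cj : ℝ) (F : Euc N → ℝ → Euc N → ℝ → ℝ) (v : Euc N → ℝ) : Prop :=
  ∀ ξ > (0:ℝ), ∀ φ : Euc N → ℝ, ContDiff ℝ 1 φ →
    ∀ x ∈ closure Ω,
      (∀ y ∈ closedBall x (Cj * ξ) ∩ closure Ω, v x - φ x ≤ v y - φ y) →
      (x ∈ Ω → 0 ≤ F x (v x) (gradient φ x) (Iin Ω j g ξ φ x + Iout Ω j g ξ v x)) ∧
      (x ∈ frontier Ω →
        0 ≤ max (F x (v x) (gradient φ x) (Iin Ω j g ξ φ x + Iout Ω j g ξ v x))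
          ⟪gradient φ x, n x⟫)

/-- `F` corresponding to the stationary equation `u - I[u] + H(x,Du) = 0`. -/
def statF (H : Euc N → Euc N → ℝ) : Euc N → ℝ → Euc N → ℝ → ℝ :=
  fun x r p I => r - I + H x p

/-- `F` corresponding to the ergodic equation `λ - I[w] - H(x,Dw) = 0`. -/
def ergF (H : Euc N → Euc N → ℝ) (lam : ℝ) : Euc N → ℝ → Euc N → ℝ → ℝ :=
  fun x _ p I => lam - I - H x p

/-- Parabolic viscosity subsolution with generalized Neumann boundary conditions,
for `F(x, t, ∂_t u, u, Du, I[u(·,t)]) = 0` in `Ω × (0,∞)`. -/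
def IsParSubSol (Ω : Set (Euc N)) (j : Euc N → Euc N → Euc N) (g : Euc N → Euc N → ℝ)
    (n : Euc N → Euc N) (Cj : ℝ) (F : Euc N → ℝ → ℝ → ℝ → Euc N → ℝ → ℝ)
    (u : Euc N → ℝ → ℝ) : Prop :=
  ∀ ξ > (0:ℝ), ∀ φ : Euc N → ℝ → ℝ,
    ContDiff ℝ 1 (fun q : Euc N × ℝ => φ q.1 q.2) →
    ∀ x ∈ closure Ω, ∀ t ∈ Ioi (0:ℝ),
      (∀ y ∈ closedBall x (Cj * ξ) ∩ closure Ω, ∀ s ∈ Ioi (0:ℝ), |s - t| ≤ ξ →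
        u y s - φ y s ≤ u x t - φ x t) →
      (x ∈ Ω →
        F x t (deriv (φ x) t) (u x t) (gradient (fun y => φ y t) x)
          (Iin Ω j g ξ (fun y => φ y t) x + Iout Ω j g ξ (fun y => u y t) x) ≤ 0) ∧
      (x ∈ frontier Ω →
        min (F x t (deriv (φ x) t) (u x t) (gradient (fun y => φ y t) x)
              (Iin Ω j g ξ (fun y => φ y t) x + Iout Ω j g ξ (fun y => u y t) x))
          ⟪gradient (fun y => φ y t) x, n x⟫ ≤ 0)

/-- Parabolic viscosity supersolution with generalized Neumann boundary conditions. -/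
def IsParSuperSol (Ω : Set (Euc N)) (j : Euc N → Euc N → Euc N) (g : Euc N → Euc N → ℝ)
    (n : Euc N → Euc N) (Cj : ℝ) (F : Euc N → ℝ → ℝ → ℝ → Euc N → ℝ → ℝ)
    (v : Euc N → ℝ → ℝ) : Prop :=
  ∀ ξ > (0:ℝ), ∀ φ : Euc N → ℝ → ℝ,
    ContDiff ℝ 1 (fun q : Euc N × ℝ => φ q.1 q.2) →
    ∀ x ∈ closure Ω, ∀ t ∈ Ioi (0:ℝ),
      (∀ y ∈ closedBall x (Cj * ξ) ∩ closure Ω, ∀ s ∈ Ioi (0:ℝ), |s - t| ≤ ξ →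
        v x t - φ x t ≤ v y s - φ y s) →
      (x ∈ Ω →
        0 ≤ F x t (deriv (φ x) t) (v x t) (gradient (fun y => φ y t) x)
          (Iin Ω j g ξ (fun y => φ y t) x + Iout Ω j g ξ (fun y => v y t) x)) ∧
      (x ∈ frontier Ω →
        0 ≤ max (F x t (deriv (φ x) t) (v x t) (gradient (fun y => φ y t) x)
              (Iin Ω j g ξ (fun y => φ y t) x + Iout Ω j g ξ (fun y => v y t) x))
          ⟪gradient (fun y => φ y t) x, n x⟫)

/-- `F` for the parabolic equation `∂_t u - I[u] + H(x,t,u,Du) = 0`. -/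
def parF (H : Euc N → ℝ → ℝ → Euc N → ℝ) : Euc N → ℝ → ℝ → ℝ → Euc N → ℝ → ℝ :=
  fun x t pt r p I => pt - I + H x t r p

/-! ### Hamiltonians: Bellman form and coercive form (stationary) -/




/-- `H` is of Bellman type with drift `b` and cost `l` over the control set `A`. -/
def IsBellman {A : Type} (b : Euc N → A → Euc N) (l : Euc N → A → ℝ)
    (H : Euc N → Euc N → ℝ) : Prop :=
  ∀ x p, H x p = ⨆ α : A, (-⟪b x α, p⟫ - l x α)

/-- Continuity and boundedness of the Bellman data `b, l`. -/
def BellmanData {A : Type} [TopologicalSpace A]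
    (b : Euc N → A → Euc N) (l : Euc N → A → ℝ) : Prop :=
  Continuous (fun q : Euc N × A => b q.1 q.2) ∧ (∃ M, ∀ x α, ‖b x α‖ ≤ M) ∧
  Continuous (fun q : Euc N × A => l q.1 q.2) ∧ (∃ M, ∀ x α, |l x α| ≤ M)

/-- Assumption (C): uniform continuity of the cost `l`. -/
def AssumptionC (Ω : Set (Euc N)) {A : Type} (l : Euc N → A → ℝ) : Prop :=
  ∃ ω, IsModulus ω ∧ ∀ (α : A), ∀ x ∈ closure Ω, ∀ y ∈ closure Ω,
    |l x α - l y α| ≤ ω ‖x - y‖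

/-- Assumption (L): uniform Lipschitz continuity of the drift `b`. -/
def AssumptionL (Ω : Set (Euc N)) {A : Type} (b : Euc N → A → Euc N) : Prop :=
  ∃ C > (0:ℝ), ∀ (α : A), ∀ x ∈ closure Ω, ∀ y ∈ closure Ω,
    ‖b x α - b y α‖ ≤ C * ‖x - y‖

/-- The part of the boundary where the drift points inwards for every control. -/
def GammaIn (Ω : Set (Euc N)) (n : Euc N → Euc N) {A : Type}
    (b : Euc N → A → Euc N) : Set (Euc N) :=
  {x | x ∈ frontier Ω ∧ ∀ α : A, ⟪b x α, n x⟫ < 0}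

/-- The part of the boundary where the drift points outwards for every control. -/
def GammaOut (Ω : Set (Euc N)) (n : Euc N → Euc N) {A : Type}
    (b : Euc N → A → Euc N) : Set (Euc N) :=
  {x | x ∈ frontier Ω ∧ ∀ α : A, 0 < ⟪b x α, n x⟫}

/-- The part of the boundary where the drift points both inwards and outwards. -/
def GammaMix (Ω : Set (Euc N)) (n : Euc N → Euc N) {A : Type}
    (b : Euc N → A → Euc N) : Set (Euc N) :=
  {x | x ∈ frontier Ω ∧ ∃ α₁ α₂ : A, ⟪b x α₁, n x⟫ < 0 ∧ 0 < ⟪b x α₂, n x⟫}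

/-- `S` is a union of connected components of `T`. -/
def IsUnionOfComponents (S T : Set (Euc N)) : Prop :=
  S ⊆ T ∧ ∀ x ∈ S, connectedComponentIn T x ⊆ S

/-- Assumption (B). -/
def AssumptionB (Ω : Set (Euc N)) (n : Euc N → Euc N) {A : Type}
    (b : Euc N → A → Euc N) : Prop :=
  GammaIn Ω n b ∪ GammaOut Ω n b ∪ GammaMix Ω n b = frontier Ω ∧
  IsUnionOfComponents (GammaIn Ω n b) (frontier Ω) ∧
  IsUnionOfComponents (GammaOut Ω n b) (frontier Ω) ∧
  IsUnionOfComponents (GammaMix Ω n b) (frontier Ω)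

/-- All the structural assumptions on a Bellman Hamiltonian: (C), (L), (B) together
with continuity and boundedness of the data. -/
def StatBellmanOK (Ω : Set (Euc N)) (n : Euc N → Euc N) {A : Type} [TopologicalSpace A]
    (b : Euc N → A → Euc N) (l : Euc N → A → ℝ) (H : Euc N → Euc N → ℝ) : Prop :=
  BellmanData b l ∧ IsBellman b l H ∧ AssumptionC Ω l ∧ AssumptionL Ω b ∧ AssumptionB Ω n b

/-- Assumption (H1): superfractional coercivity of order `m > σ`. -/
def AssumptionH1 (Ω : Set (Euc N)) (H : Euc N → Euc N → ℝ) (σ m c₀ D : ℝ) : Prop :=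
  σ < m ∧ 0 < c₀ ∧ 0 < D ∧ ∀ x ∈ closure Ω, ∀ p : Euc N, c₀ * ‖p‖ ^ m - D ≤ H x p

/-- Assumption (Ha) (sublinear case) with constant `C` and modulus `ω₁`. -/
def AssumptionHa (H : Euc N → Euc N → ℝ) (C : ℝ) (ω₁ : ℝ → ℝ) : Prop :=
  0 < C ∧ IsModulus ω₁ ∧
  ∀ x y p q : Euc N, H y p - H x q ≤ ω₁ ‖x - y‖ * (1 + ‖p‖) + C * ‖p - q‖

/-- Assumption (Hb) (superlinear case) with constants `m, A, Cb`. -/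
def AssumptionHb (H : Euc N → Euc N → ℝ) (m A Cb : ℝ) : Prop :=
  1 < m ∧ 0 < A ∧ 0 < Cb ∧
  ∀ μ ∈ Ioo (0:ℝ) 1, ∀ x p : Euc N,
    H x p - μ * H x (μ⁻¹ • p) ≤ (1 - μ) * (Cb * (1 - m) * ‖p‖ ^ m + A)

/-- Assumption (Hc) with constant `C` and modulus `ω₁`. -/
def AssumptionHc (H : Euc N → Euc N → ℝ) (m C : ℝ) (ω₁ : ℝ → ℝ) : Prop :=
  0 < C ∧ IsModulus ω₁ ∧
  ∀ x y p q : Euc N,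
    H y p - H x q ≤ ω₁ ‖x - y‖ * (1 + (max ‖p‖ ‖q‖) ^ m)
      + C * ‖p - q‖ * (max ‖p‖ ‖q‖) ^ (m - 1)

/-- The structural assumptions on a coercive Hamiltonian:
(H1), (Ha) (sublinear) or (H1), (Hb), (Hc) (superlinear). -/
def StatCoerciveOK (Ω : Set (Euc N)) (H : Euc N → Euc N → ℝ) (σ : ℝ) : Prop :=
  ∃ m c₀ D, AssumptionH1 Ω H σ m c₀ D ∧
    ((m ≤ 1 ∧ ∃ C ω₁, AssumptionHa H C ω₁) ∨
     (∃ A Cb, AssumptionHb H m A Cb ∧ ∃ C ω₁, AssumptionHc H m C ω₁))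

/-- Assumption (E). -/
def AssumptionE (Ω : Set (Euc N)) (H : Euc N → Euc N → ℝ) : Prop :=
  ∀ R > (0:ℝ), ∃ HR : ℝ, ∀ x ∈ closure Ω, ∀ p : Euc N, ‖p‖ ≤ R → |H x p| ≤ HR

/-! ### Parabolic Hamiltonians and assumptions -/

/-- `H(x,t,r,p)` is of (time-dependent) Bellman type. -/
def IsParBellman {A : Type} (lam : Euc N → ℝ → A → ℝ) (b : Euc N → ℝ → A → Euc N)
    (l : Euc N → ℝ → A → ℝ) (H : Euc N → ℝ → ℝ → Euc N → ℝ) : Prop :=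
  ∀ x t r p, H x t r p = ⨆ α : A, (lam x t α * r - ⟪b x t α, p⟫ - l x t α)

/-- Continuity and boundedness of the parabolic Bellman data. -/
def ParBellmanData {A : Type} [TopologicalSpace A] (lam : Euc N → ℝ → A → ℝ)
    (b : Euc N → ℝ → A → Euc N) (l : Euc N → ℝ → A → ℝ) : Prop :=
  Continuous (fun q : Euc N × ℝ × A => lam q.1 q.2.1 q.2.2) ∧
  (∃ M, ∀ x t α, |lam x t α| ≤ M) ∧
  Continuous (fun q : Euc N × ℝ × A => b q.1 q.2.1 q.2.2) ∧
  (∃ M, ∀ x t α, ‖b x t α‖ ≤ M) ∧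
  Continuous (fun q : Euc N × ℝ × A => l q.1 q.2.1 q.2.2) ∧
  (∃ M, ∀ x t α, |l x t α| ≤ M)

/-- Assumption (C'): uniform continuity of `l` and `λ` in `(x,t)`, uniformly in `α`. -/
def AssumptionC' (Ω : Set (Euc N)) {A : Type} (lam l : Euc N → ℝ → A → ℝ) : Prop :=
  (∃ ω, IsModulus ω ∧ ∀ (α : A), ∀ x ∈ closure Ω, ∀ y ∈ closure Ω,
      ∀ t ∈ Ici (0:ℝ), ∀ s ∈ Ici (0:ℝ), |l x t α - l y s α| ≤ ω (‖x - y‖ + |t - s|)) ∧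
  (∃ ω, IsModulus ω ∧ ∀ (α : A), ∀ x ∈ closure Ω, ∀ y ∈ closure Ω,
      ∀ t ∈ Ici (0:ℝ), ∀ s ∈ Ici (0:ℝ), |lam x t α - lam y s α| ≤ ω (‖x - y‖ + |t - s|))

/-- Assumption (L'): uniform Lipschitz continuity of the drift `b` in `(x,t)`. -/
def AssumptionL' (Ω : Set (Euc N)) {A : Type} (b : Euc N → ℝ → A → Euc N) : Prop :=
  ∃ C > (0:ℝ), ∀ (α : A), ∀ x ∈ closure Ω, ∀ y ∈ closure Ω, ∀ s ∈ Ici (0:ℝ), ∀ t ∈ Ici (0:ℝ),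
    ‖b x s α - b y t α‖ ≤ C * (‖x - y‖ + |s - t|)

/-- Inward part of the boundary for time-dependent drift. -/
def GammaInT (Ω : Set (Euc N)) (n : Euc N → Euc N) {A : Type}
    (b : Euc N → ℝ → A → Euc N) : Set (Euc N) :=
  {x | x ∈ frontier Ω ∧ ∀ t ∈ Ici (0:ℝ), ∀ α : A, ⟪b x t α, n x⟫ < 0}

/-- Outward part of the boundary for time-dependent drift. -/
def GammaOutT (Ω : Set (Euc N)) (n : Euc N → Euc N) {A : Type}
    (b : Euc N → ℝ → A → Euc N) : Set (Euc N) :=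
  {x | x ∈ frontier Ω ∧ ∀ t ∈ Ici (0:ℝ), ∀ α : A, 0 < ⟪b x t α, n x⟫}

/-- Mixed part of the boundary for time-dependent drift. -/
def GammaMixT (Ω : Set (Euc N)) (n : Euc N → Euc N) {A : Type}
    (b : Euc N → ℝ → A → Euc N) : Set (Euc N) :=
  {x | x ∈ frontier Ω ∧ ∀ t ∈ Ici (0:ℝ),
    ∃ α₁ α₂ : A, ⟪b x t α₁, n x⟫ < 0 ∧ 0 < ⟪b x t α₂, n x⟫}

/-- Assumption (B'). -/
def AssumptionB' (Ω : Set (Euc N)) (n : Euc N → Euc N) {A : Type}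
    (b : Euc N → ℝ → A → Euc N) : Prop :=
  GammaInT Ω n b ∪ GammaOutT Ω n b ∪ GammaMixT Ω n b = frontier Ω ∧
  IsUnionOfComponents (GammaInT Ω n b) (frontier Ω) ∧
  IsUnionOfComponents (GammaOutT Ω n b) (frontier Ω) ∧
  IsUnionOfComponents (GammaMixT Ω n b) (frontier Ω)

/-- All the structural assumptions on a parabolic Bellman Hamiltonian: (C'), (L'), (B'). -/
def ParBellmanOK (Ω : Set (Euc N)) (n : Euc N → Euc N) {A : Type} [TopologicalSpace A]
    (lam : Euc N → ℝ → A → ℝ) (b : Euc N → ℝ → A → Euc N) (l : Euc N → ℝ → A → ℝ)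
    (H : Euc N → ℝ → ℝ → Euc N → ℝ) : Prop :=
  ParBellmanData lam b l ∧ IsParBellman lam b l H ∧
  AssumptionC' Ω lam l ∧ AssumptionL' Ω b ∧ AssumptionB' Ω n b

/-- Assumption (H'): monotonicity of `H` in the `u` variable. -/
def AssumptionH' (Ω : Set (Euc N)) (H : Euc N → ℝ → ℝ → Euc N → ℝ) : Prop :=
  ∃ K : ℝ, ∀ R > (0:ℝ), ∃ γ, -K ≤ γ ∧
    ∀ x ∈ closure Ω, ∀ t ∈ Icc (0:ℝ) R, ∀ r s : ℝ, |r| ≤ R → |s| ≤ R → s ≤ r →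
      ∀ p : Euc N, γ * (r - s) ≤ H x t r p - H x t s p

/-- Assumption (H''): the monotonicity constants `γ_R` are bounded below by some `γ₀ > 0`. -/
def AssumptionH'' (Ω : Set (Euc N)) (H : Euc N → ℝ → ℝ → Euc N → ℝ) : Prop :=
  ∃ γ₀ > (0:ℝ), ∀ R > (0:ℝ), ∃ γ, γ₀ ≤ γ ∧
    ∀ x ∈ closure Ω, ∀ t ∈ Icc (0:ℝ) R, ∀ r s : ℝ, |r| ≤ R → |s| ≤ R → s ≤ r →
      ∀ p : Euc N, γ * (r - s) ≤ H x t r p - H x t s p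

/-- Assumption (E'). -/
def AssumptionE' (Ω : Set (Euc N)) (H : Euc N → ℝ → ℝ → Euc N → ℝ) : Prop :=
  ∀ T > (0:ℝ), ∀ R > (0:ℝ), ∃ HR : ℝ, ∀ x ∈ Ω, ∀ t ∈ Icc (0:ℝ) T, ∀ r : ℝ, ∀ p : Euc N,
    |r| ≤ R → ‖p‖ ≤ R → |H x t r p| ≤ HR

/-- Assumption (H0'): separated structure `H(x,t,r,p) = H₀(x,r,p) - f(x,t)`. -/
def AssumptionH0' (H : Euc N → ℝ → ℝ → Euc N → ℝ) : Prop :=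
  ∃ (H₀ : Euc N → ℝ → Euc N → ℝ) (f : Euc N → ℝ → ℝ),
    Continuous (fun q : Euc N × ℝ × Euc N => H₀ q.1 q.2.1 q.2.2) ∧
    UniformContinuous (fun q : Euc N × ℝ => f q.1 q.2) ∧
    (∃ M, ∀ x t, |f x t| ≤ M) ∧
    ∀ x t r p, H x t r p = H₀ x r p - f x t

/-- Assumption (He'): `H` satisfies (H1), (Ha) in `x`, uniformly in `t`
and uniformly on compact sets in `r` (sublinearly coercive case). -/
def AssumptionHe' (Ω : Set (Euc N)) (H : Euc N → ℝ → ℝ → Euc N → ℝ) (σ : ℝ) : Prop :=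
  ∃ m : ℝ, σ < m ∧ m ≤ 1 ∧
    ∀ R > (0:ℝ),
      (∃ c₀ > (0:ℝ), ∃ D > (0:ℝ), ∀ x ∈ closure Ω, ∀ t ∈ Ici (0:ℝ), ∀ r : ℝ, |r| ≤ R →
        ∀ p : Euc N, c₀ * ‖p‖ ^ m - D ≤ H x t r p) ∧
      (∃ C > (0:ℝ), ∃ ω₁, IsModulus ω₁ ∧ ∀ x y : Euc N, ∀ t ∈ Ici (0:ℝ), ∀ r : ℝ, |r| ≤ R →
        ∀ p q : Euc N, H y t r p - H x t r q ≤ ω₁ ‖x - y‖ * (1 + ‖p‖) + C * ‖p - q‖)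

/-- Assumption (He''): `H` satisfies (H1), (Hb), (Hc) in `x`, uniformly in `t`
and uniformly on compact sets in `r` (superlinearly coercive case, exponent `m`). -/
def AssumptionHe'' (Ω : Set (Euc N)) (H : Euc N → ℝ → ℝ → Euc N → ℝ) (σ m : ℝ) : Prop :=
  1 < m ∧ σ < m ∧
  ∀ R > (0:ℝ),
    (∃ c₀ > (0:ℝ), ∃ D > (0:ℝ), ∀ x ∈ closure Ω, ∀ t ∈ Ici (0:ℝ), ∀ r : ℝ, |r| ≤ R →
      ∀ p : Euc N, c₀ * ‖p‖ ^ m - D ≤ H x t r p) ∧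
    (∃ A > (0:ℝ), ∃ Cb > (0:ℝ), ∀ μ ∈ Ioo (0:ℝ) 1, ∀ x ∈ closure Ω, ∀ t ∈ Ici (0:ℝ),
      ∀ r : ℝ, |r| ≤ R → ∀ p : Euc N,
        H x t r p - μ * H x t r (μ⁻¹ • p) ≤ (1 - μ) * (Cb * (1 - m) * ‖p‖ ^ m + A)) ∧
    (∃ C > (0:ℝ), ∃ ω₁, IsModulus ω₁ ∧ ∀ x y : Euc N, ∀ t ∈ Ici (0:ℝ), ∀ r : ℝ, |r| ≤ R →
      ∀ p q : Euc N, H y t r p - H x t r q ≤ ω₁ ‖x - y‖ * (1 + (max ‖p‖ ‖q‖) ^ m)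
        + C * ‖p - q‖ * (max ‖p‖ ‖q‖) ^ (m - 1))

/-- Structural parabolic coercive assumptions: (H0') and (He') or (He''). -/
def ParCoerciveOK (Ω : Set (Euc N)) (H : Euc N → ℝ → ℝ → Euc N → ℝ) (σ : ℝ) : Prop :=
  AssumptionH0' H ∧ (AssumptionHe' Ω H σ ∨ ∃ m, AssumptionHe'' Ω H σ m)

/-! ### Iterative covering property -/

/-- The iterated reachable sets `X_r(x)` of the censored jump process. -/
def Xiter (Ω : Set (Euc N)) (j : Euc N → Euc N → Euc N) (g : Euc N → Euc N → ℝ)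
    (x : Euc N) : ℕ → Set (Euc N)
  | 0 => {x}
  | r + 1 => (⋃ ξ ∈ Xiter Ω j g x r,
      (fun z => ξ + j ξ z) '' closure (Function.support (g ξ))) ∩ closure Ω

/-- Iterative covering property: `𝒳(x) = Ω` (i.e. the closure of the reachable set
is all of `closure Ω`) for every `x ∈ Ω`. -/
def CoveringProperty (Ω : Set (Euc N)) (j : Euc N → Euc N → Euc N)
    (g : Euc N → Euc N → ℝ) : Prop :=
  ∀ x ∈ Ω, closure (⋃ r : ℕ, Xiter Ω j g x r) = closure Ω

/-
Let `(x, t)`, `(y, τ)` maximise `μ u(x, t) - v(y, τ) - η (ζ(x) + ζ(y)) - δ (t + τ)` minus a penalty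
`(|x - y|_γ + (t - τ)²) / ε`, where `|·|_γ` is a `C¹` approximation of the norm. The gradient of `ζ`
on the boundary is `n`, so the Neumann conditions hold strictly and only the equations remain.
Because the penalty is linear at infinity, its gradient `p` has size about `1 / ε` unless
`‖x - y‖ < γ`. The censored operators differ by terms that are small relative to `1 / ε`: the jumps
allowed from only one of the two points carry little weight as `x - y → 0`, uniformly on
`closure Ω`, because the boundary is negligible and the jump maps have Lipschitz inverses. If
`‖x - y‖ < γ` with `γ` tiny, these terms are negligible; otherwise they are a small multiple of
`‖p‖`, which the coercivity gained from `μ < 1` absorbs. The slope `δ` then contradicts the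
equations at every interior time, and the bounded functions cannot offset `δ t` at a late final
time, so the maximum sits at the initial time; let `δ, η → 0` and `μ → 1`.
-/

section RealInequalities

lemma mul_sub_mul_le_of_abs_sub_le {U V a b lam Lam C κ : ℝ} (hlam : 0 ≤ lam) (hLam : 0 ≤ Lam)
    (ha : a ∈ Icc 0 C) (hb : b ∈ Icc 0 C) (hab : |a - b| ≤ κ) (hU : U ≤ Lam) (hV : -V ≤ Lam)
    (hUV : U - V ≤ lam) : U * a - V * b ≤ lam * C + Lam * κ := by
  obtain ⟨hab₁, hab₂⟩ := abs_le.1 hab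
  rcases le_total a b with hle | hle
  · calc U * a - V * b = (U - V) * a + -V * (b - a) := by ring
      _ ≤ lam * a + Lam * (b - a) := by
          have := sub_nonneg.2 hle
          gcongr
          exact ha.1
      _ ≤ lam * C + Lam * κ := by gcongr <;> linarith [ha.2]
  · calc U * a - V * b = (U - V) * b + U * (a - b) := by ring
      _ ≤ lam * b + Lam * (a - b) := by
          have := sub_nonneg.2 hle
          gcongr
          exact hb.1
      _ ≤ lam * C + Lam * κ := by gcongr; exact hb.2

lemma eventually_mul_lt_nhdsGT_zero (a : ℝ) {b : ℝ} (hb : 0 < b) :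
    ∀ᶠ κ in 𝓝[>] (0 : ℝ), a * κ < b :=
  nhdsWithin_le_nhds <| ((continuous_const_mul a).tendsto' 0 0 (mul_zero a)).eventually_lt_const hb

end RealInequalities

section Compactness

lemma exists_uniform_of_forall_mem_isCompact {X ι : Type*} [PseudoMetricSpace X]
    [SemilatticeSup ι] [Nonempty ι] {K : Set X} (hK : IsCompact K) {P : ι → X → X → Prop}
    (hmono : ∀ ⦃c c' x y⦄, c ≤ c' → P c x y → P c' x y)
    (hloc : ∀ a ∈ K, ∃ c, ∃ r > 0, ∀ x ∈ K ∩ ball a r, ∀ y ∈ ball a r, P c x y) :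
    ∃ c, ∃ r > 0, ∀ x ∈ K, ∀ y, dist x y < r → P c x y := by
  suffices ∃ c, ∃ r > 0, ∀ x ∈ K ∩ K, ∀ y, dist x y < r → P c x y by simpa using this
  refine hK.induction_on (p := fun s ↦ ∃ c, ∃ r > 0, ∀ x ∈ K ∩ s, ∀ y, dist x y < r → P c x y)
    ⟨Classical.arbitrary ι, 1, one_pos, by simp⟩ ?_ ?_ ?_
  · rintro s t hst ⟨c, r, hr, h⟩
    exact ⟨c, r, hr, fun x hx ↦ h x ⟨hx.1, hst hx.2⟩⟩
  · rintro s t ⟨c, r, hr, h⟩ ⟨c', r', hr', h'⟩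
    refine ⟨c ⊔ c', min r r', lt_min hr hr', fun x ⟨hxK, hx⟩ y hxy ↦ ?_⟩
    obtain ⟨hxy, hxy'⟩ := lt_min_iff.1 hxy
    rcases hx with hx | hx
    · exact hmono le_sup_left (h x ⟨hxK, hx⟩ y hxy)
    · exact hmono le_sup_right (h' x ⟨hxK, hx⟩ y hxy')
  · intro a ha
    obtain ⟨c, r, hr, h⟩ := hloc a ha
    refine ⟨_, mem_nhdsWithin_of_mem_nhds (ball_mem_nhds a (half_pos hr)),
      c, r / 2, half_pos hr, fun x ⟨hxK, hx⟩ y hxy ↦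
        h x ⟨hxK, ball_subset_ball (half_le_self hr.le) hx⟩ y ?_⟩
    calc dist y a ≤ dist y x + dist x a := dist_triangle y x a
      _ < r / 2 + r / 2 := by rw [dist_comm y x]; exact add_lt_add hxy hx
      _ = r := add_halves r

lemma exists_isMaxOn_sub {X : Type*} [TopologicalSpace X] {S : Set X} (hS : IsCompact S)
    (hne : S.Nonempty) {F P : X → ℝ} (hF : UpperSemicontinuousOn F S) (hP : ContinuousOn P S) :
    ∃ z ∈ S, IsMaxOn (fun q ↦ F q - P q) S z := by
  have husc : UpperSemicontinuousOn (fun q ↦ F q + -P q) S := hF.add hP.neg.upperSemicontinuousOn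
  simpa only [sub_eq_add_neg] using husc.exists_isMaxOn hne hS

lemma eq_zero_of_mapClusterPt_of_le_mul {X : Type*} [TopologicalSpace X] {S : Set X} {D : X → ℝ}
    {z : ℝ → X} {a : X} {C : ℝ} (hD : ContinuousWithinAt D S a) (hDa : 0 ≤ D a)
    (ha : MapClusterPt a (𝓝[>] (0 : ℝ)) z) (hz : ∀ ε > 0, z ε ∈ S)
    (hle : ∀ ε > 0, D (z ε) ≤ C * ε) : D a = 0 := by
  by_contra hne
  have hDa_pos : 0 < D a := hDa.lt_of_ne' hne
  have hfar := mem_nhdsWithin_iff_eventually.1 (hD (lt_mem_nhds (half_lt_self hDa_pos)))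
  obtain ⟨ε, hεfar, hε, hεsmall⟩ := ((mapClusterPt_iff_frequently.1 ha _ hfar).and_eventually
    (eventually_mem_nhdsWithin.and (eventually_mul_lt_nhdsGT_zero C (half_pos hDa_pos)))).exists
  exact ((hεfar (hz ε hε)).trans_le (hle ε hε)).not_gt hεsmall

lemma exists_penalized_maximizer {X : Type*} [TopologicalSpace X] {S : Set X} (hS : IsCompact S)
    {F D : X → ℝ} {pen : ℝ → X → ℝ} (hF : UpperSemicontinuousOn F S) (hD : ContinuousOn D S)
    (hD_nonneg : ∀ q ∈ S, 0 ≤ D q) (hpen : ∀ ε > 0, ContinuousOn (pen ε) S)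
    (hpen_nonneg : ∀ ε > 0, ∀ q ∈ S, 0 ≤ pen ε q)
    (hpen_zero : ∀ ε > 0, ∀ q ∈ S, D q = 0 → pen ε q = 0)
    (hD_le : ∀ ε > 0, ∀ q ∈ S, D q ≤ ε * (pen ε q + 1))
    {q₀ : X} (hq₀ : q₀ ∈ S) (hDq₀ : D q₀ = 0) :
    ∃ a ∈ S, D a = 0 ∧ F q₀ ≤ F a ∧ ∀ U ∈ 𝓝 a, ∀ e > 0, ∃ᶠ ε in 𝓝[>] (0 : ℝ),
      ∃ z ∈ S ∩ U, IsMaxOn (fun q ↦ F q - pen ε q) S z ∧ pen ε z < e := by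
  have hexists : ∀ ε > 0, ∃ z ∈ S, IsMaxOn (fun q ↦ F q - pen ε q) S z := fun ε hε ↦
    exists_isMaxOn_sub hS ⟨q₀, hq₀⟩ hF (hpen ε hε)
  have : Nonempty X := ⟨q₀⟩
  choose! z hzS hzmax using hexists
  have hpos : ∀ᶠ ε in 𝓝[>] (0 : ℝ), 0 < ε := self_mem_nhdsWithin
  obtain ⟨a, haS, ha⟩ := hS.exists_mapClusterPt (f := 𝓝[>] (0 : ℝ)) (u := z)
    (tendsto_principal.2 (hpos.mono hzS))
  have hpen_le : ∀ ε > 0, ∀ q ∈ S, D q = 0 → pen ε (z ε) ≤ F (z ε) - F q := fun ε hε q hq hDq ↦ by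
    have h := hzmax ε hε hq
    simp only [mem_ofPred_eq, hpen_zero ε hε q hq hDq] at h
    linarith
  have hDa : D a = 0 := by
    obtain ⟨B, hB⟩ := hF.bddAbove_of_isCompact hS
    refine eq_zero_of_mapClusterPt_of_le_mul (C := B - F q₀ + 1) (hD a haS) (hD_nonneg a haS) ha hzS
      fun ε hε ↦ (hD_le ε hε _ (hzS ε hε)).trans ?_
    rw [mul_comm]
    gcongr
    exact (hpen_le ε hε q₀ hq₀ hDq₀).trans
      (sub_le_sub_right (hB (mem_image_of_mem F (hzS ε hε))) _)
  have hfreq : ∀ U ∈ 𝓝 a, ∀ e > 0, ∃ᶠ ε in 𝓝[>] (0 : ℝ), z ε ∈ U ∧ 0 < ε ∧ F (z ε) < F a + e := by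
    intro U hU e he
    have hnear := mem_nhdsWithin_iff_eventually.1 (hF a haS (F a + e) (lt_add_of_pos_right _ he))
    exact ((mapClusterPt_iff_frequently.1 ha _ (inter_mem hU hnear)).and_eventually hpos).mono
      fun ε ⟨h, hε⟩ ↦ ⟨h.1, hε, h.2 (hzS ε hε)⟩
  refine ⟨a, haS, hDa, le_of_forall_pos_lt_add fun e he ↦ ?_, fun U hU e he ↦
    (hfreq U hU e he).mono fun ε ⟨hzU, hε, hlt⟩ ↦ ⟨z ε, ⟨hzS ε hε, hzU⟩, hzmax ε hε, ?_⟩⟩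
  · obtain ⟨ε, -, hε, hlt⟩ := (hfreq univ univ_mem e he).exists
    linarith [hpen_le ε hε q₀ hq₀ hDq₀, hpen_nonneg ε hε _ (hzS ε hε)]
  · linarith [hlt, hpen_le ε hε a haS hDa]

end Compactness

section Calculus

variable {E F : Type*} [NormedAddCommGroup E] [NormedSpace ℝ E] [NormedAddCommGroup F]
  [NormedSpace ℝ F]

lemma norm_sub_sub_fderiv_le_of_lipschitzOnWith {f : E → F} {s : Set E} {L : ℝ≥0}
    (hs : Convex ℝ s) (hso : IsOpen s) (hf : DifferentiableOn ℝ f s)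
    (hL : LipschitzOnWith L (fderiv ℝ f) s) {x y : E} (hx : x ∈ s) (hy : y ∈ s) :
    ‖f y - f x - fderiv ℝ f x (y - x)‖ ≤ L * ‖y - x‖ ^ 2 := by
  have hseg : segment ℝ x y ⊆ s := hs.segment_subset hx hy
  have hbound : ∀ w ∈ segment ℝ x y, ‖fderiv ℝ f w - fderiv ℝ f x‖ ≤ L * ‖y - x‖ := fun w hw ↦ by
    have hwx : dist w x ≤ ‖y - x‖ := by
      rw [← dist_eq_norm, dist_comm w x, dist_comm y x]
      linarith [dist_add_dist_of_mem_segment hw, dist_nonneg (x := w) (y := y)]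
    rw [← dist_eq_norm]
    exact (hL.dist_le_mul w (hseg hw) x hx).trans (by gcongr)
  have hmean := Convex.norm_image_sub_le_of_norm_hasFDerivWithin_le'
    (fun w hw ↦ ((hf.differentiableAt
      (hso.mem_nhds (hseg hw))).hasFDerivAt.hasFDerivWithinAt)) hbound
    (convex_segment x y) (left_mem_segment ℝ x y) (right_mem_segment ℝ x y)
  rwa [mul_assoc, ← sq] at hmean

lemma exists_contDiff_hasCompactSupport_eventuallyEq [FiniteDimensional ℝ E] {K : Set E}
    (hK : IsCompact K) {f : E → F} (hf : ∀ x ∈ K, ContDiffAt ℝ 1 f x) :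
    ∃ f' : E → F, ContDiff ℝ 1 f' ∧ HasCompactSupport f' ∧ ∀ x ∈ K, f' =ᶠ[𝓝 x] f := by
  have hU : IsOpen {x | ContDiffAt ℝ 1 f x} :=
    isOpen_iff_mem_nhds.2 fun x hx ↦ ContDiffAt.eventually hx (by simp)
  obtain ⟨T, hT, hKT, hTU⟩ := exists_compact_between hK hU hf
  obtain ⟨χ, hχK, hχT, -⟩ := exists_contMDiffMap_one_nhds_of_subset_interior (n := (1 : ℕ∞))
    (modelWithCornersSelf ℝ E) hK.isClosed hKT
  have hχ : ContDiff ℝ 1 χ := χ.contMDiff.contDiff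
  refine ⟨fun x ↦ χ x • f x, contDiff_iff_contDiffAt.2 fun x ↦ ?_,
    .intro hT fun x hx ↦ by rw [hχT x hx, zero_smul], fun x hx ↦ ?_⟩
  · by_cases hx : x ∈ T
    · exact hχ.contDiffAt.smul (hTU hx)
    · refine (contDiffAt_const (c := (0 : F))).congr_of_eventuallyEq ?_
      filter_upwards [hT.isClosed.isOpen_compl.mem_nhds hx] with y hy
      rw [hχT y hy, zero_smul]
  · filter_upwards [eventually_nhdsSet_iff_forall.1 hχK x hx] with y hy
    rw [hy, one_smul]

end Calculus

section Integration

variable {α : Type*} [MeasurableSpace α] {μ : Measure α}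

lemma tendsto_setIntegral_zero_of_ae_eventually_notMem {ι E : Type*} [NormedAddCommGroup E]
    [NormedSpace ℝ E] {l : Filter ι} [l.IsCountablyGenerated] {f : α → E} {s : ι → Set α}
    {t : Set α} (hf : IntegrableOn f t μ) (hs : ∀ᶠ i in l, MeasurableSet (s i))
    (hst : ∀ᶠ i in l, s i ⊆ t) (hlim : ∀ᵐ z ∂μ, ∀ᶠ i in l, z ∉ s i) :
    Tendsto (fun i ↦ ∫ z in s i, f z ∂μ) l (𝓝 0) := by
  have hindicator : ∀ᶠ i in l,
      ∫ z in t, (s i).indicator f z ∂μ = ∫ z in s i, f z ∂μ := by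
    filter_upwards [hs, hst] with i hi hit
    rw [integral_indicator hi, Measure.restrict_restrict_of_subset hit]
  refine Tendsto.congr' hindicator ?_
  rw [← integral_zero α E (μ := μ.restrict t)]
  refine tendsto_integral_filter_of_dominated_convergence (fun z ↦ ‖f z‖) ?_ ?_ hf.norm ?_
  · exact hs.mono fun i hi ↦ hf.aestronglyMeasurable.indicator hi
  · exact Eventually.of_forall fun i ↦ Eventually.of_forall fun z ↦ norm_indicator_le_norm_self f z
  · filter_upwards [ae_restrict_of_ae hlim] with z hz
    exact tendsto_const_nhds.congr' (hz.mono fun i hi ↦ (indicator_of_notMem hi f).symm)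

lemma setIntegral_sub_setIntegral_le {f g w : α → ℝ} {s t : Set α} {c₁ c₂ : ℝ}
    (hs : MeasurableSet s) (ht : MeasurableSet t) (hf : IntegrableOn f s μ)
    (hg : IntegrableOn g t μ) (hw : IntegrableOn w (s ∪ t) μ)
    (hfg : ∀ z ∈ s ∩ t, f z - g z ≤ c₁ * w z) (hf_le : ∀ z ∈ s \ t, f z ≤ c₂ * w z)
    (hg_le : ∀ z ∈ t \ s, -g z ≤ c₂ * w z) :
    ∫ z in s, f z ∂μ - ∫ z in t, g z ∂μ ≤
      c₁ * ∫ z in s ∩ t, w z ∂μ + c₂ * ∫ z in symmDiff s t, w z ∂μ := by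
  have hws : IntegrableOn w (s \ t) μ := hw.mono_set (sdiff_subset.trans subset_union_left)
  have hwt : IntegrableOn w (t \ s) μ := hw.mono_set (sdiff_subset.trans subset_union_right)
  have hwst : IntegrableOn w (s ∩ t) μ := hw.mono_set (inter_subset_left.trans subset_union_left)
  have hf' : IntegrableOn f (s ∩ t) μ := hf.mono_set inter_subset_left
  have hg' : IntegrableOn g (s ∩ t) μ := hg.mono_set inter_subset_right
  have hinter : ∫ z in s ∩ t, f z ∂μ - ∫ z in s ∩ t, g z ∂μ ≤ c₁ * ∫ z in s ∩ t, w z ∂μ := by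
    rw [← integral_sub hf' hg', ← integral_const_mul]
    exact setIntegral_mono_on (hf'.sub hg') (hwst.const_mul _) (hs.inter ht) hfg
  have hleft : ∫ z in s \ t, f z ∂μ ≤ c₂ * ∫ z in s \ t, w z ∂μ := by
    rw [← integral_const_mul]
    exact setIntegral_mono_on (hf.mono_set sdiff_subset) (hws.const_mul _) (hs.diff ht) hf_le
  have hright : -∫ z in t \ s, g z ∂μ ≤ c₂ * ∫ z in t \ s, w z ∂μ := by
    rw [← integral_const_mul, ← integral_neg]
    exact setIntegral_mono_on (hg.mono_set sdiff_subset).neg (hwt.const_mul _) (ht.diff hs) hg_le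
  have hsymm : ∫ z in symmDiff s t, w z ∂μ = ∫ z in s \ t, w z ∂μ + ∫ z in t \ s, w z ∂μ :=
    setIntegral_union disjoint_sdiff_sdiff (ht.diff hs) hws hwt
  rw [← integral_inter_add_sdiff ht hf, ← integral_inter_add_sdiff hs hg, inter_comm t s, hsymm]
  linarith

end Integration

section SmoothNorm

variable {E : Type*} [NormedAddCommGroup E] {γ : ℝ}

/-- A `C¹` approximation of the norm, vanishing at the origin: `√(‖h‖² + γ²) - γ`. -/
def smoothNorm (γ : ℝ) (h : E) : ℝ := √(‖h‖ ^ 2 + γ ^ 2) - γ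

lemma norm_le_sqrt_norm_sq_add_sq (γ : ℝ) (h : E) : ‖h‖ ≤ √(‖h‖ ^ 2 + γ ^ 2) :=
  Real.le_sqrt_of_sq_le (le_add_of_nonneg_right (sq_nonneg γ))

lemma smoothNorm_zero (hγ : 0 < γ) : smoothNorm γ (0 : E) = 0 := by
  simp [smoothNorm, Real.sqrt_sq hγ.le]

lemma smoothNorm_nonneg (γ : ℝ) (h : E) : 0 ≤ smoothNorm γ h :=
  sub_nonneg.2 (Real.le_sqrt_of_sq_le (le_add_of_nonneg_left (sq_nonneg ‖h‖)))

lemma norm_sub_le_smoothNorm (γ : ℝ) (h : E) : ‖h‖ - γ ≤ smoothNorm γ h :=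
  sub_le_sub_right (norm_le_sqrt_norm_sq_add_sq γ h) γ

lemma smoothNorm_neg (γ : ℝ) (h : E) : smoothNorm γ (-h) = smoothNorm γ h := by
  simp only [smoothNorm, norm_neg]

-- `√(‖h‖² + γ²)` is the norm of `(h, γ)` in the Hilbert sum `E × ℝ`.
lemma abs_smoothNorm_sub_smoothNorm_le (γ : ℝ) (h k : E) :
    |smoothNorm γ h - smoothNorm γ k| ≤ ‖h - k‖ := by
  have hsqrt (h : E) : √(‖h‖ ^ 2 + γ ^ 2) = ‖WithLp.toLp 2 (h, γ)‖ := by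
    simp [WithLp.prod_norm_eq_of_L2]
  calc |smoothNorm γ h - smoothNorm γ k|
      = |‖WithLp.toLp 2 (h, γ)‖ - ‖WithLp.toLp 2 (k, γ)‖| := by
        rw [smoothNorm, smoothNorm, hsqrt, hsqrt, sub_sub_sub_cancel_right]
    _ ≤ ‖WithLp.toLp 2 (h, γ) - WithLp.toLp 2 (k, γ)‖ := abs_norm_sub_norm_le _ _
    _ = ‖h - k‖ := by
        rw [← WithLp.toLp_sub, Prod.mk_sub_mk, sub_self, WithLp.prod_norm_eq_of_L2]
        simp

variable [InnerProductSpace ℝ E]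

/-- The gradient of `smoothNorm γ`. -/
def smoothNormGrad (γ : ℝ) (h : E) : E := (√(‖h‖ ^ 2 + γ ^ 2))⁻¹ • h

lemma contDiff_smoothNorm (hγ : 0 < γ) : ContDiff ℝ 1 (smoothNorm γ : E → ℝ) :=
  (((contDiff_norm_sq ℝ).add contDiff_const).sqrt fun h ↦ by positivity).sub contDiff_const

lemma hasGradientAt_smoothNorm [CompleteSpace E] (hγ : 0 < γ) (h : E) :
    HasGradientAt (smoothNorm γ) (smoothNormGrad γ h) h := by
  rw [hasGradientAt_iff_hasFDerivAt]
  have hderiv : InnerProductSpace.toDual ℝ E (smoothNormGrad γ h) =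
      (1 / (2 * √(‖h‖ ^ 2 + γ ^ 2))) • (2 • innerSL ℝ h) := by
    ext k
    rw [InnerProductSpace.toDual_apply_apply, smoothNormGrad, real_inner_smul_left]
    simp
    ring
  rw [hderiv]
  exact (((hasStrictFDerivAt_norm_sq h).hasFDerivAt.add_const (γ ^ 2)).sqrt
    (by positivity)).sub_const γ

lemma smoothNormGrad_neg (γ : ℝ) (h : E) : smoothNormGrad γ (-h) = -smoothNormGrad γ h := by
  simp only [smoothNormGrad, norm_neg, smul_neg]

lemma one_le_two_mul_norm_smoothNormGrad (hγ : 0 < γ) {h : E} (hh : γ ≤ ‖h‖) :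
    1 ≤ 2 * ‖smoothNormGrad γ h‖ := by
  have hsqrt_pos : 0 < √(‖h‖ ^ 2 + γ ^ 2) := by positivity
  have hsqrt_le : √(‖h‖ ^ 2 + γ ^ 2) ≤ 2 * ‖h‖ := by
    refine Real.sqrt_le_iff.2 ⟨by positivity, ?_⟩
    nlinarith
  rw [smoothNormGrad, norm_smul, Real.norm_of_nonneg (by positivity), ← mul_assoc, mul_comm 2,
    mul_assoc, inv_mul_eq_div, one_le_div hsqrt_pos]
  exact hsqrt_le

lemma neg_mul_norm_le_inner_smoothNormGrad {h k : E} {C : ℝ} (hC : 0 ≤ C)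
    (hquad : -(C * ‖h‖ ^ 2) ≤ ⟪h, k⟫) : -(C * ‖h‖) ≤ ⟪smoothNormGrad γ h, k⟫ := by
  have hratio : (√(‖h‖ ^ 2 + γ ^ 2))⁻¹ * ‖h‖ ≤ 1 :=
    inv_mul_le_one_of_le₀ (norm_le_sqrt_norm_sq_add_sq γ h) (Real.sqrt_nonneg _)
  calc -(C * ‖h‖) ≤ -(C * ‖h‖ * ((√(‖h‖ ^ 2 + γ ^ 2))⁻¹ * ‖h‖)) :=
        neg_le_neg (mul_le_of_le_one_right (by positivity) hratio)
    _ = (√(‖h‖ ^ 2 + γ ^ 2))⁻¹ * -(C * ‖h‖ ^ 2) := by ring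
    _ ≤ (√(‖h‖ ^ 2 + γ ^ 2))⁻¹ * ⟪h, k⟫ := by gcongr
    _ = ⟪smoothNormGrad γ h, k⟫ := (real_inner_smul_left _ _ _).symm

end SmoothNorm

section Boundary

variable {Ω : Set (Euc N)} {n : Euc N → Euc N}

lemma sdist_eq_zero_of_mem_frontier {x : Euc N} (hx : x ∈ frontier Ω) : sdist Ω x = 0 := by
  rw [frontier_eq_closure_inter_closure] at hx
  rw [sdist, ← infDist_closure (s := Ωᶜ), ← infDist_closure (s := Ω), infDist_zero_of_mem hx.1,
    infDist_zero_of_mem hx.2, sub_zero]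

lemma sdist_nonneg_of_mem_closure {x : Euc N} (hx : x ∈ closure Ω) : 0 ≤ sdist Ω x := by
  rw [sdist, ← infDist_closure (s := Ω), infDist_zero_of_mem hx, sub_zero]
  exact infDist_nonneg

namespace IsW2Chart

variable {hN : 0 < N} {s : Euc N} {r : ℝ} {ψ ψinv : Euc N → Euc N}

lemma contDiffOn_sdist (h : IsW2Chart hN Ω s r ψ ψinv) : ContDiffOn ℝ 1 (sdist Ω) (ball s r) := by
  obtain ⟨-, hψ, -, -, -, -, hlast⟩ := h
  exact (((EuclideanSpace.proj _ : Euc N →L[ℝ] ℝ).contDiff).comp_contDiffOn hψ).congr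
    fun x hx ↦ (hlast x hx).symm

lemma exists_lipschitzOnWith_fderiv_sdist (h : IsW2Chart hN Ω s r ψ ψinv) :
    ∃ L : ℝ≥0, LipschitzOnWith L (fderiv ℝ (sdist Ω)) (ball s r) := by
  obtain ⟨-, hψ, ⟨L, hL⟩, -, -, -, hlast⟩ := h
  set π : Euc N →L[ℝ] ℝ := EuclideanSpace.proj ⟨N - 1, Nat.sub_lt hN Nat.one_pos⟩
  have hfderiv : EqOn (fderiv ℝ (sdist Ω)) (fun x ↦ π.comp (fderiv ℝ ψ x)) (ball s r) := by
    intro x hx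
    have hx' := isOpen_ball.mem_nhds hx
    have heq : sdist Ω =ᶠ[𝓝 x] π ∘ ψ := by
      filter_upwards [hx'] with y hy using (hlast y hy).symm
    rw [heq.fderiv_eq]
    exact (π.hasFDerivAt.comp x
      ((hψ.differentiableOn one_ne_zero).differentiableAt hx').hasFDerivAt).fderiv
  refine ⟨‖π‖₊ * L, .of_dist_le_mul fun x hx y hy ↦ ?_⟩
  rw [hfderiv hx, hfderiv hy, dist_eq_norm, ← ContinuousLinearMap.comp_sub, NNReal.coe_mul,
    mul_assoc]
  refine (π.opNorm_comp_le _).trans (mul_le_mul_of_nonneg_left ?_ (norm_nonneg π))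
  rw [← dist_eq_norm]
  exact hL.dist_le_mul x hx y hy

end IsW2Chart

lemma IsExteriorNormal.exists_neg_mul_norm_sq_le_inner {hN : 0 < N} (hn : IsExteriorNormal Ω n)
    (hΩ : IsW2Domain hN Ω) (hbdd : Bornology.IsBounded Ω) :
    ∃ C : ℝ≥0, ∃ r > 0, ∀ x ∈ frontier Ω, ∀ y, dist x y < r → y ∈ closure Ω →
      -(C * ‖x - y‖ ^ 2) ≤ ⟪x - y, n x⟫ := by
  have hK : IsCompact (frontier Ω) :=
    hbdd.isCompact_closure.of_isClosed_subset isClosed_frontier frontier_subset_closure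
  refine exists_uniform_of_forall_mem_isCompact hK (P := fun (C : ℝ≥0) x y ↦
    y ∈ closure Ω → -(C * ‖x - y‖ ^ 2) ≤ ⟪x - y, n x⟫) (fun C C' x y hC h hy ↦ ?_) fun a ha ↦ ?_
  · exact (neg_le_neg (by gcongr)).trans (h hy)
  · obtain ⟨r, ψ, ψinv, hchart⟩ := hΩ.2 a ha
    obtain ⟨L, hL⟩ := hchart.exists_lipschitzOnWith_fderiv_sdist
    refine ⟨L, r, hchart.1, fun x ⟨hxf, hx⟩ y hy hyΩ ↦ ?_⟩
    have htaylor := norm_sub_sub_fderiv_le_of_lipschitzOnWith (convex_ball a r) isOpen_ball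
      (hchart.contDiffOn_sdist.differentiableOn one_ne_zero) hL hx hy
    have hinner : fderiv ℝ (sdist Ω) x (y - x) = ⟪x - y, n x⟫ := by
      rw [(hasGradientAt_iff_hasFDerivAt.1 (hn x hxf).2).fderiv,
        InnerProductSpace.toDual_apply_apply, real_inner_comm, inner_neg_right, ← inner_neg_left,
        neg_sub]
    rw [hinner, sdist_eq_zero_of_mem_frontier hxf, sub_zero,
      norm_sub_rev y x] at htaylor
    linarith [(abs_le.1 htaylor).2, sdist_nonneg_of_mem_closure hyΩ]

lemma IsExteriorNormal.exists_contDiff_hasGradientAt {hN : 0 < N} (hn : IsExteriorNormal Ω n)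
    (hΩ : IsW2Domain hN Ω) (hbdd : Bornology.IsBounded Ω) :
    ∃ ζ : Euc N → ℝ, ContDiff ℝ 1 ζ ∧ HasCompactSupport ζ ∧
      ∀ x ∈ frontier Ω, HasGradientAt ζ (n x) x := by
  have hK : IsCompact (frontier Ω) :=
    hbdd.isCompact_closure.of_isClosed_subset isClosed_frontier frontier_subset_closure
  obtain ⟨ζ, hζ, hsupp, heq⟩ := exists_contDiff_hasCompactSupport_eventuallyEq hK
    (f := fun x ↦ -sdist Ω x) fun x hx ↦ by
      obtain ⟨r, ψ, ψinv, hchart⟩ := hΩ.2 x hx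
      exact (hchart.contDiffOn_sdist.contDiffAt (ball_mem_nhds x hchart.1)).neg
  refine ⟨ζ, hζ, hsupp, fun x hx ↦ ?_⟩
  have hgrad : HasGradientAt (fun x ↦ -sdist Ω x) (n x) x := by
    have h := (hasGradientAt_iff_hasFDerivAt.1 (hn x hx).2).neg
    rw [← map_neg, neg_neg] at h
    exact hasGradientAt_iff_hasFDerivAt.2 h
  exact hgrad.congr_of_eventuallyEq (heq x hx)

lemma IsW2Domain.volume_frontier {hN : 0 < N} (hΩ : IsW2Domain hN Ω) :
    volume (frontier Ω) = 0 := by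
  refine measure_null_of_locally_null _ fun s hs ↦ ?_
  obtain ⟨r, ψ, ψinv, hr, -, -, hψinv, -, hleft, hlast⟩ := hΩ.2 s hs
  refine ⟨frontier Ω ∩ ball s r, inter_mem_nhdsWithin _ (ball_mem_nhds s hr), ?_⟩
  set i : Fin N := ⟨N - 1, Nat.sub_lt hN Nat.one_pos⟩
  have hhyperplane : volume {y : Euc N | y i = 0} = 0 := by
    rw [← Measure.pi_hyperplane (fun _ : Fin N ↦ (volume : Measure ℝ)) i 0]
    exact (PiLp.volume_preserving_ofLp (Fin N)).measure_preimage
      (measurableSet_eq_fun (measurable_pi_apply i) measurable_const).nullMeasurableSet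
  have hsub : frontier Ω ∩ ball s r ⊆ ψinv '' (ψ '' ball s r ∩ {y | y i = 0}) := by
    rintro x ⟨hxf, hx⟩
    exact ⟨ψ x, ⟨mem_image_of_mem ψ hx, (hlast x hx).trans (sdist_eq_zero_of_mem_frontier hxf)⟩,
      hleft x hx⟩
  exact measure_mono_null hsub <| addHaar_image_eq_zero_of_differentiableOn_of_addHaar_eq_zero _
    ((hψinv.differentiableOn one_ne_zero).mono inter_subset_left)
    (measure_mono_null inter_subset_right hhyperplane)

end Boundary

section Jumps

variable {Ω : Set (Euc N)} {j : Euc N → Euc N → Euc N} {σ Aj Cj' Cj Dj : ℝ}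

/-- The weight `‖z‖ ‖z‖^{-(N+σ)}`, which dominates the nonlocal integrands of Lipschitz
functions; it is locally integrable because `σ < 1`. -/
def jumpWeight (N : ℕ) (σ : ℝ) (z : Euc N) : ℝ := ‖z‖ * ‖z‖ ^ (-((N : ℝ) + σ))

/-- The jumps `z` from `x` that the censored operator allows, i.e. those landing in
`closure Ω`. -/
def jumpSet (Ω : Set (Euc N)) (j : Euc N → Euc N → Euc N) (x : Euc N) : Set (Euc N) :=
  {z | x + j x z ∈ closure Ω}

/-- The weight of the jumps that are allowed from exactly one of `x` and `y`. -/
def jumpDefect (Ω : Set (Euc N)) (j : Euc N → Euc N → Euc N) (σ : ℝ) (x y : Euc N) : ℝ :=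
  ∫ z in symmDiff (jumpSet Ω j x) (jumpSet Ω j y), jumpWeight N σ z

lemma jumpWeight_nonneg (σ : ℝ) (z : Euc N) : 0 ≤ jumpWeight N σ z := by
  unfold jumpWeight
  positivity

lemma measurable_jumpWeight (σ : ℝ) : Measurable (jumpWeight N σ) := by
  unfold jumpWeight
  fun_prop

lemma setIntegral_jumpWeight_mono {s t : Set (Euc N)} (ht : IntegrableOn (jumpWeight N σ) t)
    (hst : s ⊆ t) : ∫ z in s, jumpWeight N σ z ≤ ∫ z in t, jumpWeight N σ z :=
  setIntegral_mono_set ht (Eventually.of_forall (jumpWeight_nonneg σ)) hst.eventuallyLE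

lemma integrableOn_jumpWeight_ball (hN : 0 < N) (hσ : σ < 1) (R : ℝ) :
    IntegrableOn (jumpWeight N σ) (ball 0 R) := by
  refine integrableOn_ball_of_norm_le_rpow (C := 1) (α := (N : ℝ) + σ - 1) ?_ ?_ ?_
    (measurable_jumpWeight σ).aestronglyMeasurable
  · rwa [finrank_euclideanSpace_fin]
  · rw [finrank_euclideanSpace_fin]
    linarith
  · have : Nonempty (Fin N) := ⟨⟨0, hN⟩⟩
    filter_upwards [compl_mem_ae_iff.2 (measure_singleton (0 : Euc N))] with z hz
    rw [Real.norm_of_nonneg (jumpWeight_nonneg σ z), one_mul,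
      show -((N : ℝ) + σ - 1) = 1 + -((N : ℝ) + σ) by ring, Real.rpow_add (norm_pos_iff.2 hz),
      Real.rpow_one, jumpWeight]

lemma tendsto_setIntegral_jumpWeight_ball (hN : 0 < N) (hσ : σ < 1) :
    Tendsto (fun ξ ↦ ∫ z in ball 0 ξ, jumpWeight N σ z) (𝓝[>] 0) (𝓝 0) := by
  have : Nonempty (Fin N) := ⟨⟨0, hN⟩⟩
  refine tendsto_setIntegral_zero_of_ae_eventually_notMem (integrableOn_jumpWeight_ball hN hσ 1)
    (Eventually.of_forall fun ξ ↦ measurableSet_ball) ?_ ?_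
  · filter_upwards [nhdsWithin_le_nhds (Iic_mem_nhds one_pos)] with ξ hξ using ball_subset_ball hξ
  · filter_upwards [compl_mem_ae_iff.2 (measure_singleton (0 : Euc N))] with z hz
    filter_upwards [nhdsWithin_le_nhds (Iio_mem_nhds (norm_pos_iff.2 hz))] with ξ hξ
    simpa using hξ.le

lemma measurableSet_jumpSet {x : Euc N} (hj : Measurable (j x)) :
    MeasurableSet (jumpSet Ω j x) :=
  (hj.const_add x) isClosed_closure.measurableSet

lemma AssumptionJ0.measurable (hJ0 : AssumptionJ0 Ω j Aj) {x : Euc N} (hx : x ∈ closure Ω) :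
    Measurable (j x) :=
  (hJ0 x hx).1.continuous.measurable

lemma AssumptionJ1.exists_jumpSet_subset_ball (hJ1 : AssumptionJ1 Ω j Cj' Cj Dj)
    (hbdd : Bornology.IsBounded Ω) : ∃ R, ∀ x ∈ closure Ω, jumpSet Ω j x ⊆ ball 0 R := by
  obtain ⟨R, hR⟩ := hbdd.closure.subset_ball 0
  obtain ⟨hCj', -, -, hj, -⟩ := hJ1
  refine ⟨(R + R) / Cj', fun x hx z hz ↦ ?_⟩
  rw [mem_ball_zero_iff, lt_div_iff₀' hCj']
  calc Cj' * ‖z‖ ≤ ‖j x z‖ := (hj x hx z).1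
    _ = ‖x + j x z - x‖ := by rw [add_sub_cancel_left]
    _ ≤ ‖x + j x z‖ + ‖x‖ := norm_sub_le _ _
    _ < R + R := add_lt_add (mem_ball_zero_iff.1 (hR hz)) (mem_ball_zero_iff.1 (hR hx))

lemma AssumptionJ0.ae_add_notMem_frontier {hN : 0 < N} (hJ0 : AssumptionJ0 Ω j Aj)
    (hΩ : IsW2Domain hN Ω) {x : Euc N} (hx : x ∈ closure Ω) :
    ∀ᵐ z, x + j x z ∉ frontier Ω := by
  obtain ⟨-, hbij, hinv, -⟩ := hJ0 x hx
  have hsub : {z | ¬ x + j x z ∉ frontier Ω} ⊆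
      invFun (j x) '' ((fun w ↦ x + w) ⁻¹' frontier Ω) :=
    fun z hz ↦ ⟨j x z, not_not.1 hz, leftInverse_invFun hbij.1 z⟩
  refine measure_mono_null hsub <| addHaar_image_eq_zero_of_differentiableOn_of_addHaar_eq_zero _
    (hinv.differentiable one_ne_zero).differentiableOn ?_
  rw [measure_preimage_add, hΩ.volume_frontier]

lemma AssumptionJ1.ae_eventually_mem_jumpSet_iff {hN : 0 < N} (hJ1 : AssumptionJ1 Ω j Cj' Cj Dj)
    (hJ0 : AssumptionJ0 Ω j Aj) (hΩ : IsW2Domain hN Ω) {a : Euc N} (ha : a ∈ closure Ω) :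
    ∀ᵐ z, ∀ᶠ x in 𝓝[closure Ω] a, (z ∈ jumpSet Ω j x ↔ z ∈ jumpSet Ω j a) := by
  filter_upwards [hJ0.ae_add_notMem_frontier hΩ ha] with z hz
  have hlip : LipschitzOnWith (Dj * ‖z‖).toNNReal (fun x ↦ j x z) (closure Ω) :=
    .of_dist_le_mul fun x hx y hy ↦ by
      rw [dist_eq_norm, dist_eq_norm]
      exact (hJ1.2.2.2.2 x hx y hy z).trans (by gcongr; exact Real.le_coe_toNNReal _)
  have hcont : Tendsto (fun x ↦ x + j x z) (𝓝[closure Ω] a) (𝓝 (a + j a z)) :=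
    continuousWithinAt_id.add (hlip.continuousOn a ha)
  by_cases hza : a + j a z ∈ closure Ω
  · have hint : a + j a z ∈ interior Ω := by
      by_contra h
      exact hz ⟨hza, h⟩
    filter_upwards [hcont.eventually (isOpen_interior.mem_nhds hint)] with x hx
    exact iff_of_true (interior_subset_closure hx) hza
  · filter_upwards [hcont.eventually (isClosed_closure.isOpen_compl.mem_nhds hza)] with x hx
    exact iff_of_false hx hza

lemma AssumptionJ1.tendsto_jumpDefect {hN : 0 < N} (hJ1 : AssumptionJ1 Ω j Cj' Cj Dj)
    (hJ0 : AssumptionJ0 Ω j Aj) (hΩ : IsW2Domain hN Ω) (hbdd : Bornology.IsBounded Ω)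
    (hσ : σ < 1) {a : Euc N} (ha : a ∈ closure Ω) :
    Tendsto (fun p : Euc N × Euc N ↦ jumpDefect Ω j σ p.1 p.2)
      (𝓝[closure Ω] a ×ˢ 𝓝[closure Ω] a) (𝓝 0) := by
  obtain ⟨R, hR⟩ := hJ1.exists_jumpSet_subset_ball hbdd
  have hmem : ∀ᶠ p : Euc N × Euc N in 𝓝[closure Ω] a ×ˢ 𝓝[closure Ω] a,
      p.1 ∈ closure Ω ∧ p.2 ∈ closure Ω :=
    eventually_mem_nhdsWithin.prod_mk eventually_mem_nhdsWithin
  refine tendsto_setIntegral_zero_of_ae_eventually_notMem (integrableOn_jumpWeight_ball hN hσ R)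
    (hmem.mono fun p hp ↦ ?_) (hmem.mono fun p hp ↦ ?_) ?_
  · exact (measurableSet_jumpSet (hJ0.measurable hp.1)).symmDiff
      (measurableSet_jumpSet (hJ0.measurable hp.2))
  · exact symmDiff_subset_union.trans (union_subset (hR _ hp.1) (hR _ hp.2))
  · filter_upwards [hJ1.ae_eventually_mem_jumpSet_iff hJ0 hΩ ha] with z hz
    filter_upwards [hz.prod_mk hz] with p hp
    rw [mem_symmDiff, hp.1, hp.2]
    tauto

lemma AssumptionJ1.exists_jumpDefect_le {hN : 0 < N} (hJ1 : AssumptionJ1 Ω j Cj' Cj Dj)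
    (hJ0 : AssumptionJ0 Ω j Aj) (hΩ : IsW2Domain hN Ω) (hbdd : Bornology.IsBounded Ω)
    (hσ : σ < 1) {e : ℝ} (he : 0 < e) :
    ∃ r > 0, ∀ x ∈ closure Ω, ∀ y ∈ closure Ω, ‖x - y‖ < r → jumpDefect Ω j σ x y ≤ e := by
  have hloc : ∀ a ∈ closure Ω, ∃ _ : Unit, ∃ r > 0, ∀ x ∈ closure Ω ∩ ball a r, ∀ y ∈ ball a r,
      y ∈ closure Ω → jumpDefect Ω j σ x y ≤ e := by
    intro a ha
    have hlim : ∀ᶠ p in 𝓝[closure Ω ×ˢ closure Ω] (a, a), jumpDefect Ω j σ p.1 p.2 ≤ e := by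
      rw [nhdsWithin_prod_eq]
      exact (hJ1.tendsto_jumpDefect hJ0 hΩ hbdd hσ ha).eventually (ge_mem_nhds he)
    obtain ⟨r, hr, h⟩ := mem_nhdsWithin_iff.1 hlim
    rw [← ball_prod_same] at h
    exact ⟨(), r, hr, fun x hx y hy hyΩ ↦ @h (x, y) ⟨⟨hx.2, hy⟩, hx.1, hyΩ⟩⟩
  obtain ⟨-, r, hr, h⟩ := exists_uniform_of_forall_mem_isCompact hbdd.isCompact_closure
    (P := fun (_ : Unit) x y ↦ y ∈ closure Ω → jumpDefect Ω j σ x y ≤ e)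
    (fun _ _ _ _ _ h ↦ h) hloc
  exact ⟨r, hr, fun x hx y hy hxy ↦ h x hx y (by rwa [dist_eq_norm]) hy⟩

end Jumps

section Nonlocal

variable {Ω : Set (Euc N)} {g : Euc N → Euc N → ℝ} {j : Euc N → Euc N → Euc N}
  {Cμ Dμ σ Aj Cj' Cj Dj ξ : ℝ}

lemma Iin_eq_setIntegral (φ : Euc N → ℝ) (x : Euc N) :
    Iin Ω j g ξ φ x = ∫ z in ball 0 ξ ∩ jumpSet Ω j x, (φ (x + j x z) - φ x) * g x z := by
  have hset : {z | ‖z‖ < ξ ∧ x + j x z ∈ closure Ω} = ball 0 ξ ∩ jumpSet Ω j x := by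
    ext z
    simp [jumpSet]
  rw [Iin, hset]

lemma Iout_eq_setIntegral (u : Euc N → ℝ) (x : Euc N) :
    Iout Ω j g ξ u x = ∫ z in (ball 0 ξ)ᶜ ∩ jumpSet Ω j x, (u (x + j x z) - u x) * g x z := by
  have hset : {z | ξ ≤ ‖z‖ ∧ x + j x z ∈ closure Ω} = (ball 0 ξ)ᶜ ∩ jumpSet Ω j x := by
    ext z
    simp [jumpSet]
  rw [Iout, hset]

lemma Iout_const_mul (c : ℝ) (u : Euc N → ℝ) (x : Euc N) :
    Iout Ω j g ξ (fun y ↦ c * u y) x = c * Iout Ω j g ξ u x := by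
  simp only [Iout, ← integral_const_mul, ← mul_sub, mul_assoc]

lemma AssumptionM1.abs_Iin_le (hM : AssumptionM1 Ω g Cμ σ) (hJ1 : AssumptionJ1 Ω j Cj' Cj Dj)
    (hN : 0 < N) {φ : Euc N → ℝ} {B : ℝ} (hB : 0 ≤ B) {x : Euc N} (hx : x ∈ closure Ω)
    (hφ : ∀ y, |φ y - φ x| ≤ B * ‖y - x‖) :
    |Iin Ω j g ξ φ x| ≤ B * Cj * Cμ * ∫ z in ball (0 : Euc N) ξ, jumpWeight N σ z := by
  obtain ⟨hCμ, hσ, -, hg_nonneg, hg_le⟩ := hM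
  obtain ⟨-, hCj, -, hj, -⟩ := hJ1
  have hW := integrableOn_jumpWeight_ball hN hσ.2 ξ
  have hpoint : ∀ z, ‖(φ (x + j x z) - φ x) * g x z‖ ≤ B * Cj * Cμ * jumpWeight N σ z := by
    intro z
    have hφz : |φ (x + j x z) - φ x| ≤ B * (Cj * ‖z‖) := by
      simpa only [add_sub_cancel_left] using
        (hφ (x + j x z)).trans (mul_le_mul_of_nonneg_left (by simpa using (hj x hx z).2) hB)
    rw [norm_mul, Real.norm_eq_abs, Real.norm_of_nonneg (hg_nonneg x hx z)]
    calc |φ (x + j x z) - φ x| * g x z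
        ≤ B * (Cj * ‖z‖) * (Cμ * ‖z‖ ^ (-((N : ℝ) + σ))) :=
          mul_le_mul hφz (hg_le x hx z) (hg_nonneg x hx z) (by positivity)
      _ = B * Cj * Cμ * jumpWeight N σ z := by rw [jumpWeight]; ring
  rw [Iin_eq_setIntegral, ← Real.norm_eq_abs]
  calc ‖∫ z in ball 0 ξ ∩ jumpSet Ω j x, (φ (x + j x z) - φ x) * g x z‖
      ≤ ∫ z in ball 0 ξ ∩ jumpSet Ω j x, B * Cj * Cμ * jumpWeight N σ z :=
        norm_integral_le_of_norm_le ((hW.mono_set inter_subset_left).const_mul _)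
          (Eventually.of_forall hpoint)
    _ = B * Cj * Cμ * ∫ z in ball 0 ξ ∩ jumpSet Ω j x, jumpWeight N σ z := integral_const_mul _ _
    _ ≤ B * Cj * Cμ * ∫ z in ball 0 ξ, jumpWeight N σ z :=
        mul_le_mul_of_nonneg_left (setIntegral_jumpWeight_mono hW inter_subset_left)
          (by positivity)

lemma AssumptionM1.integrableOn_increment (hM : AssumptionM1 Ω g Cμ σ)
    (hJ1 : AssumptionJ1 Ω j Cj' Cj Dj) (hbdd : Bornology.IsBounded Ω) {u : Euc N → ℝ}
    (hu_bdd : BddOn u (closure Ω)) (hu : Measurable ((closure Ω).domRestrict u)) {x : Euc N}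
    (hx : x ∈ closure Ω) (hj : Measurable (j x)) (hξ : 0 < ξ) :
    IntegrableOn (fun z ↦ (u (x + j x z) - u x) * g x z) ((ball 0 ξ)ᶜ ∩ jumpSet Ω j x) := by
  obtain ⟨hCμ, hσ, hg, hg_nonneg, hg_le⟩ := hM
  obtain ⟨R, hR⟩ := hJ1.exists_jumpSet_subset_ball hbdd
  obtain ⟨B, hB⟩ := hu_bdd
  have hs : MeasurableSet ((ball 0 ξ)ᶜ ∩ jumpSet Ω j x) :=
    measurableSet_ball.compl.inter (measurableSet_jumpSet hj)
  have hs_finite : volume ((ball 0 ξ)ᶜ ∩ jumpSet Ω j x) ≠ ∞ :=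
    ((measure_mono (inter_subset_right.trans (hR x hx))).trans_lt measure_ball_lt_top).ne
  have hu_jump : Measurable fun z : ↥((ball 0 ξ)ᶜ ∩ jumpSet Ω j x) ↦ u (x + j x z) :=
    hu.comp (g := (closure Ω).domRestrict u)
      (f := fun z : ↥((ball 0 ξ)ᶜ ∩ jumpSet Ω j x) ↦ ⟨x + j x z, z.2.2⟩)
      ((hj.comp measurable_subtype_coe).const_add x).subtype_mk
  have hmeas := aemeasurable_restrict_of_measurable_subtype (μ := volume) hs
    (f := fun z ↦ (u (x + j x z) - u x) * g x z)
    ((hu_jump.sub_const (u x)).mul ((hg x).comp measurable_subtype_coe))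
  refine ⟨hmeas.aestronglyMeasurable, .restrict_of_bounded
    (C := 2 * B * (Cμ * ξ ^ (-((N : ℝ) + σ)))) hs_finite.lt_top
    ((ae_restrict_iff' hs).2 (Eventually.of_forall fun z ⟨hzξ, hz⟩ ↦ ?_))⟩
  rw [mem_compl_iff, mem_ball_zero_iff, not_lt] at hzξ
  have hu_le : |u (x + j x z) - u x| ≤ 2 * B := by
    linarith [abs_sub (u (x + j x z)) (u x), hB _ hz, hB x hx]
  have hg_le' : g x z ≤ Cμ * ξ ^ (-((N : ℝ) + σ)) := by
    refine (hg_le x hx z).trans (mul_le_mul_of_nonneg_left ?_ hCμ.le)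
    exact Real.rpow_le_rpow_of_nonpos hξ hzξ (by linarith [hσ.1, N.cast_nonneg (α := ℝ)])
  rw [norm_mul, Real.norm_eq_abs, Real.norm_of_nonneg (hg_nonneg x hx z)]
  exact mul_le_mul hu_le hg_le' (hg_nonneg x hx z) ((abs_nonneg _).trans hu_le)

lemma measurable_domRestrict_slice_of_upperSemicontinuousOn {X T : Type*} [TopologicalSpace X]
    [MeasurableSpace X] [OpensMeasurableSpace X] [TopologicalSpace T] {S : Set X} {I : Set T}
    {u : X → T → ℝ} (hu : UpperSemicontinuousOn (fun q : X × T ↦ u q.1 q.2) (S ×ˢ I)) {t : T}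
    (ht : t ∈ I) : Measurable (S.domRestrict fun y ↦ u y t) :=
  UpperSemicontinuous.measurable <| (upperSemicontinuousOn_iff_restrict.2 hu).comp
    (g := fun y : S ↦ (⟨(y, t), y.2, ht⟩ : ↥(S ×ˢ I))) (by fun_prop)

lemma measurable_domRestrict_slice_of_lowerSemicontinuousOn {X T : Type*} [TopologicalSpace X]
    [MeasurableSpace X] [OpensMeasurableSpace X] [TopologicalSpace T] {S : Set X} {I : Set T}
    {u : X → T → ℝ} (hu : LowerSemicontinuousOn (fun q : X × T ↦ u q.1 q.2) (S ×ˢ I)) {t : T}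
    (ht : t ∈ I) : Measurable (S.domRestrict fun y ↦ u y t) :=
  LowerSemicontinuous.measurable <| (lowerSemicontinuous_restrict_iff.2 hu).comp
    (g := fun y : S ↦ (⟨(y, t), y.2, ht⟩ : ↥(S ×ˢ I))) (by fun_prop)

lemma AssumptionM.mul_density_sub_mul_density_le (hM : AssumptionM Ω g Cμ Dμ σ) {x y z : Euc N}
    (hx : x ∈ closure Ω) (hy : y ∈ closure Ω) {U V lam Lam : ℝ} (hlam : 0 ≤ lam) (hLam : 0 ≤ Lam)
    (hU : U ≤ Lam * ‖z‖) (hV : -V ≤ Lam * ‖z‖) (hUV : U - V ≤ lam * ‖z‖) :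
    U * g x z - V * g y z ≤ (lam * Cμ + Lam * (Dμ * ‖x - y‖)) * jumpWeight N σ z := by
  obtain ⟨⟨-, -, -, hg_nonneg, hg_le⟩, -, hg_lip⟩ := hM
  calc U * g x z - V * g y z
      ≤ lam * ‖z‖ * (Cμ * ‖z‖ ^ (-((N : ℝ) + σ)))
        + Lam * ‖z‖ * (Dμ * ‖x - y‖ * ‖z‖ ^ (-((N : ℝ) + σ))) :=
        mul_sub_mul_le_of_abs_sub_le (by positivity) (by positivity)
          ⟨hg_nonneg x hx z, hg_le x hx z⟩ ⟨hg_nonneg y hy z, hg_le y hy z⟩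
          (hg_lip x hx y hy z) hU hV hUV
    _ = (lam * Cμ + Lam * (Dμ * ‖x - y‖)) * jumpWeight N σ z := by rw [jumpWeight]; ring

lemma AssumptionM1.mul_density_le (hM : AssumptionM1 Ω g Cμ σ) {x z : Euc N} (hx : x ∈ closure Ω)
    {U Lam : ℝ} (hLam : 0 ≤ Lam) (hU : U ≤ Lam * ‖z‖) :
    U * g x z ≤ Lam * Cμ * jumpWeight N σ z := by
  obtain ⟨-, -, -, hg_nonneg, hg_le⟩ := hM
  calc U * g x z ≤ Lam * ‖z‖ * g x z := mul_le_mul_of_nonneg_right hU (hg_nonneg x hx z)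
    _ ≤ Lam * ‖z‖ * (Cμ * ‖z‖ ^ (-((N : ℝ) + σ))) := by gcongr; exact hg_le x hx z
    _ = Lam * Cμ * jumpWeight N σ z := by rw [jumpWeight]; ring

lemma AssumptionJ1.increments_le (hJ1 : AssumptionJ1 Ω j Cj' Cj Dj) {u v : Euc N → ℝ} {x y : Euc N}
    (hx : x ∈ closure Ω) (hy : y ∈ closure Ω) {lam b : ℝ} (hlam : 0 ≤ lam) (hb : 0 ≤ b)
    (huv : ∀ x' ∈ closure Ω, ∀ y' ∈ closure Ω, (u x' - u x) - (v y' - v y) ≤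
      lam * ‖(x' - x) - (y' - y)‖ + b * (‖x' - x‖ + ‖y' - y‖)) :
    (∀ z ∈ jumpSet Ω j x, u (x + j x z) - u x ≤ (lam + b) * Cj * ‖z‖) ∧
    (∀ z ∈ jumpSet Ω j y, -(v (y + j y z) - v y) ≤ (lam + b) * Cj * ‖z‖) ∧
    ∀ z ∈ jumpSet Ω j x ∩ jumpSet Ω j y, (u (x + j x z) - u x) - (v (y + j y z) - v y) ≤
      (lam * (Dj * ‖x - y‖) + 2 * b * Cj) * ‖z‖ := by
  obtain ⟨-, -, -, hj, hj_lip⟩ := hJ1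
  refine ⟨fun z hz ↦ ?_, fun z hz ↦ ?_, fun z hz ↦ ?_⟩
  · have h := huv _ hz y hy
    simp only [add_sub_cancel_left, sub_self, sub_zero, norm_zero, add_zero] at h
    nlinarith [(hj x hx z).2]
  · have h := huv x hx _ hz
    simp only [add_sub_cancel_left, sub_self, zero_sub, norm_neg, norm_zero, zero_add] at h
    nlinarith [(hj y hy z).2]
  · have h := huv _ hz.1 _ hz.2
    simp only [add_sub_cancel_left] at h
    nlinarith [(hj x hx z).2, (hj y hy z).2, hj_lip x hx y hy z]

lemma AssumptionM.Iout_sub_Iout_le (hM : AssumptionM Ω g Cμ Dμ σ) (hJ0 : AssumptionJ0 Ω j Aj)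
    (hJ1 : AssumptionJ1 Ω j Cj' Cj Dj) (hN : 0 < N) (hbdd : Bornology.IsBounded Ω)
    {u v : Euc N → ℝ} (hu_bdd : BddOn u (closure Ω)) (hu : Measurable ((closure Ω).domRestrict u))
    (hv_bdd : BddOn v (closure Ω)) (hv : Measurable ((closure Ω).domRestrict v)) {x y : Euc N}
    (hx : x ∈ closure Ω) (hy : y ∈ closure Ω) {lam b R : ℝ} (hlam : 0 ≤ lam) (hb : 0 ≤ b)
    (huv : ∀ x' ∈ closure Ω, ∀ y' ∈ closure Ω, (u x' - u x) - (v y' - v y) ≤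
      lam * ‖(x' - x) - (y' - y)‖ + b * (‖x' - x‖ + ‖y' - y‖))
    (hR : ∀ x ∈ closure Ω, jumpSet Ω j x ⊆ ball 0 R) (hξ : 0 < ξ) :
    Iout Ω j g ξ u x - Iout Ω j g ξ v y ≤
      ((lam * (Dj * ‖x - y‖) + 2 * b * Cj) * Cμ + (lam + b) * Cj * (Dμ * ‖x - y‖))
          * (∫ z in ball (0 : Euc N) R, jumpWeight N σ z)
        + (lam + b) * Cj * Cμ * jumpDefect Ω j σ x y := by
  have hjx := hJ0.measurable hx
  have hjy := hJ0.measurable hy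
  have hCj := hJ1.2.1
  have hDj := hJ1.2.2.1
  have hCμ := hM.1.1
  have hDμ := hM.2.1
  have hw := integrableOn_jumpWeight_ball hN hM.1.2.1.2 R
  have hw_union := hw.mono_set (union_subset (hR x hx) (hR y hy))
  obtain ⟨hu_le, hv_le, huv_le⟩ := hJ1.increments_le hx hy hlam hb huv
  rw [Iout_eq_setIntegral, Iout_eq_setIntegral]
  refine (setIntegral_sub_setIntegral_le
    (measurableSet_ball.compl.inter (measurableSet_jumpSet hjx))
    (measurableSet_ball.compl.inter (measurableSet_jumpSet hjy))
    (hM.1.integrableOn_increment hJ1 hbdd hu_bdd hu hx hjx hξ)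
    (hM.1.integrableOn_increment hJ1 hbdd hv_bdd hv hy hjy hξ)
    (hw_union.mono_set (union_subset_union inter_subset_right inter_subset_right))
    (fun z hz ↦ hM.mul_density_sub_mul_density_le hx hy (by positivity) (by positivity)
      (hu_le z hz.1.2) (hv_le z hz.2.2) (huv_le z ⟨hz.1.2, hz.2.2⟩))
    (fun z hz ↦ hM.1.mul_density_le hx (by positivity) (hu_le z hz.1.2))
    (fun z hz ↦ (neg_mul _ _).symm.trans_le
      (hM.1.mul_density_le hy (by positivity) (hv_le z hz.1.2)))).trans ?_
  rw [← inter_symmDiff_distrib_left, jumpDefect]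
  refine add_le_add (mul_le_mul_of_nonneg_left ?_ (by positivity))
    (mul_le_mul_of_nonneg_left ?_ (by positivity))
  · exact setIntegral_jumpWeight_mono hw
      ((inter_subset_left.trans inter_subset_right).trans (hR x hx))
  · exact setIntegral_jumpWeight_mono (hw_union.mono_set symmDiff_subset_union) inter_subset_right

end Nonlocal

section Hamiltonian

variable {H : Euc N → Euc N → ℝ} {m A Cb C μ : ℝ} {ω₁ : ℝ → ℝ}

lemma IsModulus.exists_forall_lt_le {ω : ℝ → ℝ} (hω : IsModulus ω) {e : ℝ} (he : 0 < e) :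
    ∃ d > 0, ∀ s < d, ω s ≤ e := by
  obtain ⟨d, hde, hd⟩ := ((hω.2.2.eventually_le_const he).and self_mem_nhdsWithin).exists
  exact ⟨d, hd, fun s hs ↦ (hω.2.1 hs.le).trans hde⟩

lemma two_rpow_neg_mul_add_one_rpow_le {r : ℝ} (hr : 0 ≤ r) (hm : 0 ≤ m) :
    (2 : ℝ) ^ (-m) * (r + 1) ^ m ≤ r ^ m + 1 := by
  have hmean : (r + 1) / 2 ≤ max r 1 := by
    rcases le_total r 1 with h | h
    · exact le_max_of_le_right (by linarith)
    · exact le_max_of_le_left (by linarith)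
  calc (2 : ℝ) ^ (-m) * (r + 1) ^ m = ((r + 1) / 2) ^ m := by
        rw [Real.div_rpow (by positivity) zero_le_two, Real.rpow_neg zero_le_two, div_eq_inv_mul]
    _ ≤ max r 1 ^ m := Real.rpow_le_rpow (by positivity) hmean hm
    _ ≤ r ^ m + 1 := by
        rcases max_choice r 1 with h | h <;> rw [h]
        · linarith
        · linarith [Real.one_rpow m, Real.rpow_nonneg hr m]

lemma hamiltonian_sub_mul_le (hHb : AssumptionHb H m A Cb) (hHc : AssumptionHc H m C ω₁)
    (hμ : μ ∈ Ioo (0 : ℝ) 1) (x y : Euc N) {p q : Euc N} (hpq : ‖q - p‖ ≤ 1) :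
    H y q - μ * H x (μ⁻¹ • p) ≤ (1 - μ) * (Cb * (m - 1) + A)
      + (2 * ω₁ ‖x - y‖ + C * ‖q - p‖ - (1 - μ) * (Cb * (m - 1) * (2 : ℝ) ^ (-m)))
        * (‖p‖ + 1) ^ m := by
  obtain ⟨hm, -, hCb, hb⟩ := hHb
  obtain ⟨hC, hω, hc⟩ := hHc
  have hmax : max ‖q‖ ‖p‖ ≤ ‖p‖ + 1 :=
    max_le (by linarith [norm_sub_norm_le q p]) (by linarith)
  have hp : 1 ≤ ‖p‖ + 1 := by linarith [norm_nonneg p]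
  have hpow : max ‖q‖ ‖p‖ ^ m ≤ (‖p‖ + 1) ^ m := by gcongr
  have hpow_sub_one : max ‖q‖ ‖p‖ ^ (m - 1) ≤ (‖p‖ + 1) ^ m :=
    calc max ‖q‖ ‖p‖ ^ (m - 1) ≤ (‖p‖ + 1) ^ (m - 1) := by gcongr
      _ ≤ (‖p‖ + 1) ^ m := Real.rpow_le_rpow_of_exponent_le hp (by linarith)
  have hcoercive : (1 - μ) * (Cb * (1 - m) * ‖p‖ ^ m + A) ≤ (1 - μ) *
      (Cb * (m - 1) + A - Cb * (m - 1) * ((2 : ℝ) ^ (-m) * (‖p‖ + 1) ^ m)) := by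
    have hstep := mul_le_mul_of_nonneg_left
      (two_rpow_neg_mul_add_one_rpow_le (norm_nonneg p) (by linarith : 0 ≤ m))
      (mul_pos hCb (sub_pos.2 hm)).le
    exact mul_le_mul_of_nonneg_left (by linarith) (by linarith [hμ.2])
  have hcontinuity : H y q - H x p ≤
      ω₁ ‖x - y‖ * (2 * (‖p‖ + 1) ^ m) + C * ‖q - p‖ * (‖p‖ + 1) ^ m := by
    have hone : 1 ≤ (‖p‖ + 1) ^ m := Real.one_le_rpow hp (by linarith)
    refine (hc x y q p).trans (add_le_add ?_ ?_)
    · exact mul_le_mul_of_nonneg_left (by linarith) (hω.1 _)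
    · gcongr
  linarith [hb μ hμ x p]

/-- Quantitative coercivity: passing from the momentum `p` at `x` (scaled by `μ`) to `q` at `y`
costs at most `δ`, with a gain linear in `P`, whenever `x` is close to `y` and `p`, `q` are within
`l` of `P`. -/
def HasCoercivityGap (H : Euc N → Euc N → ℝ) (μ δ l : ℝ) : Prop :=
  ∃ c > 0, ∃ d > 0, ∀ x y P p q : Euc N, ‖x - y‖ < d → ‖p - P‖ ≤ l → ‖q - P‖ ≤ l →
    H y q - μ * H x (μ⁻¹ • p) ≤ δ - c * (1 + ‖P‖)

lemma HasCoercivityGap.mono {δ l l' : ℝ} (h : HasCoercivityGap H μ δ l') (hl : l ≤ l') :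
    HasCoercivityGap H μ δ l := by
  obtain ⟨c, hc, d, hd, hgap⟩ := h
  exact ⟨c, hc, d, hd, fun x y P p q hxy hp hq ↦ hgap x y P p q hxy (hp.trans hl) (hq.trans hl)⟩

lemma eventually_exists_hasCoercivityGap (hHb : AssumptionHb H m A Cb)
    (hHc : AssumptionHc H m C ω₁) {δ : ℝ} (hδ : 0 < δ) :
    ∀ᶠ μ in 𝓝[<] (1 : ℝ), ∃ l > 0, HasCoercivityGap H μ δ l := by
  have hsmall : ∀ᶠ μ in 𝓝[<] (1 : ℝ), (1 - μ) * (Cb * (m - 1) + A) < δ := by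
    have hcont : Continuous fun μ : ℝ ↦ (1 - μ) * (Cb * (m - 1) + A) := by fun_prop
    exact ((hcont.tendsto' 1 0 (by simp)).mono_left nhdsWithin_le_nhds).eventually_lt_const hδ
  filter_upwards [hsmall, Ioo_mem_nhdsLT zero_lt_one] with μ hμδ hμ
  have hm : 0 < m - 1 := by linarith [hHb.1]
  have hC := hHc.1
  obtain ⟨c, hc⟩ : ∃ c, c = (1 - μ) * (Cb * (m - 1) * (2 : ℝ) ^ (-m)) := ⟨_, rfl⟩
  have hc_pos : 0 < c := by
    have := hHb.2.2.1
    have : 0 < 1 - μ := by linarith [hμ.2]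
    rw [hc]; positivity
  obtain ⟨d, hd, hω⟩ := hHc.2.1.exists_forall_lt_le (show 0 < c / 8 by positivity)
  refine ⟨min (1 / 2) (c / (8 * C)), by positivity, c / 4, by positivity, d, hd, ?_⟩
  intro x y P p q hxy hp hq
  have hqp : ‖q - p‖ ≤ 2 * min (1 / 2) (c / (8 * C)) := by
    linarith [norm_sub_le_norm_sub_add_norm_sub q P p, norm_sub_rev P p]
  have hCqp : C * ‖q - p‖ ≤ c / 4 :=
    calc C * ‖q - p‖ ≤ C * (2 * (c / (8 * C))) := by
          gcongr; exact hqp.trans (by gcongr; exact min_le_right _ _)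
      _ = c / 4 := by field_simp; norm_num
  have hG : 1 + ‖P‖ ≤ 2 * (‖p‖ + 1) ^ m := by
    have hpow : ‖p‖ + 1 ≤ (‖p‖ + 1) ^ m :=
      Real.self_le_rpow_of_one_le (by linarith [norm_nonneg p]) (by linarith)
    linarith [norm_sub_norm_le P p, norm_sub_rev P p, min_le_left (1 / 2) (c / (8 * C)),
      norm_nonneg p]
  have hgap := hamiltonian_sub_mul_le hHb hHc hμ x y (hqp.trans (by
    linarith [min_le_left (1 / 2) (c / (8 * C))]))
  rw [← hc] at hgap
  have hcoeff : 2 * ω₁ ‖x - y‖ + C * ‖q - p‖ - c ≤ -(c / 2) := by linarith [hω _ hxy]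
  nlinarith [mul_le_mul_of_nonneg_right hcoeff
    (Real.rpow_nonneg (by positivity : 0 ≤ ‖p‖ + 1) m)]

end Hamiltonian

section Doubling

/-- Parameters of the doubled functional
`μ u(x,t) - v(y,τ) - η ζ(x) - η ζ(y) - δ t - δ τ`: the factor `μ < 1` exploits coercivity, the
weight `η ζ` makes the Neumann conditions strict, and the slope `δ` makes the equations strict. -/
structure DoublingParams (N : ℕ) where
  μ : ℝ
  η : ℝ
  δ : ℝ
  ζ : Euc N → ℝ
  L : ℝ≥0
  μ_pos : 0 < μ
  η_pos : 0 < η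
  contDiff_ζ : ContDiff ℝ 1 ζ
  lipschitzWith_ζ : LipschitzWith L ζ

/-- The doubled functional, without the penalty forcing the two points together. -/
def DoublingParams.gain (D : DoublingParams N) (u v : Euc N → ℝ → ℝ)
    (q : (Euc N × ℝ) × (Euc N × ℝ)) : ℝ :=
  D.μ * u q.1.1 q.1.2 - v q.2.1 q.2.2 - D.η * (D.ζ q.1.1 + D.ζ q.2.1) - D.δ * (q.1.2 + q.2.2)

/-- The penalty `(smoothNorm γ (x - y) + (t - τ)²) / ε` on a pair of points `((x, t), (y, τ))`. -/
def doublingPenalty (γ ε : ℝ) (q : (Euc N × ℝ) × (Euc N × ℝ)) : ℝ :=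
  (smoothNorm γ (q.1.1 - q.2.1) + (q.1.2 - q.2.2) ^ 2) / ε

/-- The test function obtained by freezing one of the doubled points at `w`, scaled by `c`
(`c = μ⁻¹` for the subsolution and `c = -1` for the supersolution). -/
def DoublingParams.testFun (D : DoublingParams N) (γ ε c : ℝ) (w : Euc N × ℝ) (x : Euc N) (t : ℝ) :
    ℝ :=
  c * (doublingPenalty γ ε ((x, t), w) + D.η * D.ζ x + D.δ * t)

variable {D : DoublingParams N} {γ ε c t : ℝ} {w : Euc N × ℝ} {x : Euc N}

lemma contDiff_doublingPenalty (hγ : 0 < γ) :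
    ContDiff ℝ 1 (doublingPenalty γ ε : (Euc N × ℝ) × (Euc N × ℝ) → ℝ) :=
  (((contDiff_smoothNorm hγ).comp
    (contDiff_fst.fst.sub contDiff_snd.fst)).add
      ((contDiff_fst.snd.sub contDiff_snd.snd).pow 2)).div_const ε

lemma doublingPenalty_swap (q : (Euc N × ℝ) × (Euc N × ℝ)) :
    doublingPenalty γ ε q.swap = doublingPenalty γ ε q := by
  simp only [doublingPenalty, Prod.fst_swap, Prod.snd_swap]
  rw [← smoothNorm_neg, neg_sub, ← neg_sub q.1.2, neg_sq]

lemma norm_sub_add_sq_le_mul_doublingPenalty (hε : 0 < ε) (hγε : γ ≤ ε)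
    (q : (Euc N × ℝ) × (Euc N × ℝ)) :
    ‖q.1.1 - q.2.1‖ + (q.1.2 - q.2.2) ^ 2 ≤ ε * (doublingPenalty γ ε q + 1) := by
  rw [doublingPenalty, mul_add, mul_div_cancel₀ _ hε.ne', mul_one]
  linarith [norm_sub_le_smoothNorm γ (q.1.1 - q.2.1)]

lemma norm_sub_div_le_doublingPenalty_add (hε : 0 < ε) (hγε : γ ≤ ε ^ 2)
    (q : (Euc N × ℝ) × (Euc N × ℝ)) :
    ‖q.1.1 - q.2.1‖ / ε ≤ doublingPenalty γ ε q + ε := by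
  rw [doublingPenalty, div_add' _ _ _ hε.ne']
  gcongr
  nlinarith [norm_sub_le_smoothNorm γ (q.1.1 - q.2.1), sq_nonneg (q.1.2 - q.2.2)]

lemma doublingPenalty_nonneg (hε : 0 ≤ ε) (q : (Euc N × ℝ) × (Euc N × ℝ)) :
    0 ≤ doublingPenalty γ ε q :=
  div_nonneg (add_nonneg (smoothNorm_nonneg γ _) (sq_nonneg _)) hε

lemma doublingPenalty_eq_zero (hγ : 0 < γ) {q : (Euc N × ℝ) × (Euc N × ℝ)}
    (hq : q.1 = q.2) : doublingPenalty γ ε q = 0 := by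
  simp [doublingPenalty, hq, smoothNorm_zero hγ]

lemma norm_sub_add_sq_eq_zero_iff (q : (Euc N × ℝ) × (Euc N × ℝ)) :
    ‖q.1.1 - q.2.1‖ + (q.1.2 - q.2.2) ^ 2 = 0 ↔ q.1 = q.2 := by
  rw [add_eq_zero_iff_of_nonneg (norm_nonneg _) (sq_nonneg _), norm_eq_zero, sub_eq_zero,
    sq_eq_zero_iff, sub_eq_zero, Prod.ext_iff]

lemma DoublingParams.contDiff_testFun (hγ : 0 < γ) :
    ContDiff ℝ 1 (fun q : Euc N × ℝ ↦ D.testFun γ ε c w q.1 q.2) :=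
  contDiff_const.mul ((((contDiff_doublingPenalty hγ).comp (contDiff_id.prodMk contDiff_const)).add
    (contDiff_const.mul (D.contDiff_ζ.comp contDiff_fst))).add (contDiff_const.mul contDiff_snd))

lemma DoublingParams.deriv_testFun :
    deriv (D.testFun γ ε c w x) t = c * (2 * (t - w.2) / ε + D.δ) := by
  have hpen : HasDerivAt (fun s ↦ doublingPenalty γ ε ((x, s), w)) (2 * (t - w.2) / ε) t := by
    simpa [doublingPenalty] using ((((hasDerivAt_id t).sub_const w.2).pow 2).const_add
      (smoothNorm γ (x - w.1))).div_const ε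
  exact (((hpen.add_const (D.η * D.ζ x)).add
    (by simpa using (hasDerivAt_id t).const_mul D.δ)).const_mul c).deriv

lemma DoublingParams.gradient_testFun (hγ : 0 < γ) :
    gradient (fun x ↦ D.testFun γ ε c w x t) x =
      c • (ε⁻¹ • smoothNormGrad γ (x - w.1) + D.η • gradient D.ζ x) := by
  have hnorm := ((hasGradientAt_smoothNorm hγ (x - w.1)).hasFDerivAt.comp x
    ((hasFDerivAt_id x).sub_const w.1)).add_const ((t - w.2) ^ 2) |>.mul_const ε⁻¹
  have hζ := ((D.contDiff_ζ.differentiable one_ne_zero) x).hasGradientAt.hasFDerivAt.const_mul D.η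
  refine HasGradientAt.gradient (hasGradientAt_iff_hasFDerivAt.2 ?_)
  exact (((hnorm.add hζ).add_const (D.δ * t)).const_mul c).congr_fderiv (by simp)

lemma doublingPenalty_sub_le (hε : 0 < ε) (x x' y y' : Euc N) (t τ : ℝ) :
    |doublingPenalty γ ε ((x', t), (y', τ)) - doublingPenalty γ ε ((x, t), (y, τ))| ≤
      1 / ε * ‖(x' - x) - (y' - y)‖ := by
  rw [doublingPenalty, doublingPenalty, ← sub_div, add_sub_add_right_eq_sub, abs_div,
    abs_of_pos hε, one_div_mul_eq_div, sub_sub_sub_comm]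
  gcongr
  exact abs_smoothNorm_sub_smoothNorm_le γ _ _

lemma DoublingParams.abs_ζ_sub_le (x y : Euc N) : |D.ζ x - D.ζ y| ≤ D.L * ‖x - y‖ :=
  D.lipschitzWith_ζ.norm_sub_le x y

lemma DoublingParams.norm_gradient_ζ_le (x : Euc N) : ‖gradient D.ζ x‖ ≤ D.L := by
  rw [gradient, LinearIsometryEquiv.norm_map]
  exact norm_fderiv_le_of_lipschitz ℝ D.lipschitzWith_ζ

lemma DoublingParams.abs_testFun_sub_le (hε : 0 < ε) (x' : Euc N) :
    |D.testFun γ ε c w x' t - D.testFun γ ε c w x t| ≤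
      |c| * (1 / ε + D.η * D.L) * ‖x' - x‖ := by
  have hpen := doublingPenalty_sub_le (γ := γ) hε x x' w.1 w.1 t w.2
  rw [sub_self, sub_zero] at hpen
  have hζ : |D.η * (D.ζ x' - D.ζ x)| ≤ D.η * (D.L * ‖x' - x‖) := by
    rw [abs_mul, abs_of_pos D.η_pos]
    exact mul_le_mul_of_nonneg_left (D.abs_ζ_sub_le x' x) D.η_pos.le
  calc |D.testFun γ ε c w x' t - D.testFun γ ε c w x t|
      = |c| * |(doublingPenalty γ ε ((x', t), w) - doublingPenalty γ ε ((x, t), w))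
          + D.η * (D.ζ x' - D.ζ x)| := by
        rw [testFun, testFun, ← abs_mul]; ring_nf
    _ ≤ |c| * (1 / ε * ‖x' - x‖ + D.η * (D.L * ‖x' - x‖)) := by
        gcongr; exact (abs_add_le _ _).trans (add_le_add hpen hζ)
    _ = |c| * (1 / ε + D.η * D.L) * ‖x' - x‖ := by ring

end Doubling

section Maximum

variable {Ω : Set (Euc N)} {g : Euc N → Euc N → ℝ} {j : Euc N → Euc N → Euc N}
  {n : Euc N → Euc N} {H : Euc N → Euc N → ℝ} {Cμ σ Cj' Cj Dj ξ γ ε : ℝ}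
  {u v : Euc N → ℝ → ℝ} {D : DoublingParams N} {J : Set ℝ} {x y : Euc N} {t τ : ℝ}

lemma IsParSubSol.le_zero_of_inner_pos {F : Euc N → ℝ → ℝ → ℝ → Euc N → ℝ → ℝ}
    (hu : IsParSubSol Ω j g n Cj F u) (hΩ : IsOpen Ω) (hξ : 0 < ξ) {φ : Euc N → ℝ → ℝ}
    (hφ : ContDiff ℝ 1 (fun q : Euc N × ℝ ↦ φ q.1 q.2)) (hx : x ∈ closure Ω) (ht : 0 < t)
    (hmax : ∀ y ∈ closure Ω, ∀ s ∈ closedBall t ξ, u y s - φ y s ≤ u x t - φ x t)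
    (hinner : x ∈ frontier Ω → 0 < ⟪gradient (fun y ↦ φ y t) x, n x⟫) :
    F x t (deriv (φ x) t) (u x t) (gradient (fun y ↦ φ y t) x)
      (Iin Ω j g ξ (fun y ↦ φ y t) x + Iout Ω j g ξ (fun y ↦ u y t) x) ≤ 0 := by
  obtain ⟨hint, hbdry⟩ := hu ξ hξ φ hφ x hx t ht fun y hy s _ hs ↦ hmax y hy.2 s hs
  by_cases hxΩ : x ∈ Ω
  · exact hint hxΩ
  · have hfr : x ∈ frontier Ω := hΩ.frontier_eq ▸ ⟨hx, hxΩ⟩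
    exact (min_le_iff.1 (hbdry hfr)).resolve_right (hinner hfr).not_ge

lemma IsParSuperSol.zero_le_of_inner_neg {F : Euc N → ℝ → ℝ → ℝ → Euc N → ℝ → ℝ}
    (hv : IsParSuperSol Ω j g n Cj F v) (hΩ : IsOpen Ω) (hξ : 0 < ξ) {φ : Euc N → ℝ → ℝ}
    (hφ : ContDiff ℝ 1 (fun q : Euc N × ℝ ↦ φ q.1 q.2)) (hx : x ∈ closure Ω) (ht : 0 < t)
    (hmin : ∀ y ∈ closure Ω, ∀ s ∈ closedBall t ξ, v x t - φ x t ≤ v y s - φ y s)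
    (hinner : x ∈ frontier Ω → ⟪gradient (fun y ↦ φ y t) x, n x⟫ < 0) :
    0 ≤ F x t (deriv (φ x) t) (v x t) (gradient (fun y ↦ φ y t) x)
      (Iin Ω j g ξ (fun y ↦ φ y t) x + Iout Ω j g ξ (fun y ↦ v y t) x) := by
  obtain ⟨hint, hbdry⟩ := hv ξ hξ φ hφ x hx t ht fun y hy s _ hs ↦ hmin y hy.2 s hs
  by_cases hxΩ : x ∈ Ω
  · exact hint hxΩ
  · have hfr : x ∈ frontier Ω := hΩ.frontier_eq ▸ ⟨hx, hxΩ⟩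
    exact (le_max_iff.1 (hbdry hfr)).resolve_right (hinner hfr).not_ge

/-- The doubled functional with penalty attains its maximum over `(closure Ω × J)²` at
`((x, t), (y, τ))`. -/
structure DoublingParams.IsMaximizer (D : DoublingParams N) (Ω : Set (Euc N)) (J : Set ℝ) (γ ε : ℝ)
    (u v : Euc N → ℝ → ℝ) (x : Euc N) (t : ℝ) (y : Euc N) (τ : ℝ) : Prop where
  left_mem : x ∈ closure Ω
  left_time_mem : t ∈ J
  right_mem : y ∈ closure Ω
  right_time_mem : τ ∈ J
  isMaxOn : IsMaxOn (fun q ↦ D.gain u v q - doublingPenalty γ ε q)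
    ((closure Ω ×ˢ J) ×ˢ (closure Ω ×ˢ J)) ((x, t), (y, τ))

namespace DoublingParams.IsMaximizer

lemma increment_le (h : D.IsMaximizer Ω J γ ε u v x t y τ) (hε : 0 < ε)
    {x' : Euc N} (hx' : x' ∈ closure Ω) {y' : Euc N} (hy' : y' ∈ closure Ω) :
    (D.μ * u x' t - D.μ * u x t) - (v y' τ - v y τ) ≤
      1 / ε * ‖(x' - x) - (y' - y)‖ + D.η * D.L * (‖x' - x‖ + ‖y' - y‖) := by
  have hmax := isMaxOn_iff.1 h.isMaxOn ((x', t), (y', τ))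
    ⟨⟨hx', h.left_time_mem⟩, hy', h.right_time_mem⟩
  have hpen := (abs_le.1 (doublingPenalty_sub_le (γ := γ) hε x x' y y' t τ)).2
  have hζx := mul_le_mul_of_nonneg_left (abs_le.1 (D.abs_ζ_sub_le x' x)).2 D.η_pos.le
  have hζy := mul_le_mul_of_nonneg_left (abs_le.1 (D.abs_ζ_sub_le y' y)).2 D.η_pos.le
  simp only [gain] at hmax
  linarith

/-- The nonlocal term on `ball 0 ξ` is bounded through the Lipschitz constant of the test function;
it is made to vanish with `ξ` once the two viscosity inequalities are subtracted. -/
lemma subsolution_le (h : D.IsMaximizer Ω J γ ε u v x t y τ) (hγ : 0 < γ) (hε : 0 < ε)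
    (hN : 0 < N) (hΩ : IsOpen Ω) (hM : AssumptionM1 Ω g Cμ σ) (hJ1 : AssumptionJ1 Ω j Cj' Cj Dj)
    (hu : IsParSubSol Ω j g n Cj (fun x _ pt _ p I ↦ pt - I + H x p) u)
    (ht : 0 < t) (hξ : 0 < ξ) (hJ : closedBall t ξ ⊆ J)
    (hinner : x ∈ frontier Ω →
      0 < ⟪ε⁻¹ • smoothNormGrad γ (x - y) + D.η • gradient D.ζ x, n x⟫) :
    2 * (t - τ) / ε + D.δ ≤ D.μ * Iout Ω j g ξ (fun z ↦ u z t) x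
      - D.μ * H x (D.μ⁻¹ • (ε⁻¹ • smoothNormGrad γ (x - y) + D.η • gradient D.ζ x))
      + (1 / ε + D.η * D.L) * Cj * Cμ * ∫ z in ball (0 : Euc N) ξ, jumpWeight N σ z := by
  have hμ := D.μ_pos
  have hη := D.η_pos
  have hineq := hu.le_zero_of_inner_pos hΩ hξ
    (D.contDiff_testFun (ε := ε) (c := D.μ⁻¹) (w := (y, τ)) hγ) h.left_mem ht
    (fun x' hx' s hs ↦ ?_) (fun hx ↦ ?_)
  · have hIin := hM.abs_Iin_le (ξ := ξ) hJ1 hN (by positivity) h.left_mem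
      (fun x' ↦ D.abs_testFun_sub_le (γ := γ) (c := D.μ⁻¹) (t := t) (w := (y, τ)) hε x')
    rw [abs_of_pos (inv_pos.2 hμ)] at hIin
    rw [D.deriv_testFun, D.gradient_testFun hγ] at hineq
    have hmul := mul_le_mul_of_nonneg_left (add_le_add hineq ((le_abs_self _).trans hIin)) hμ.le
    field_simp at hmul ⊢
    linarith
  · have hmax := isMaxOn_iff.1 h.isMaxOn ((x', s), (y, τ))
      ⟨⟨hx', hJ hs⟩, h.right_mem, h.right_time_mem⟩
    simp only [gain] at hmax
    rw [← mul_le_mul_iff_right₀ hμ, testFun, testFun, mul_sub, mul_sub,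
      mul_inv_cancel_left₀ hμ.ne', mul_inv_cancel_left₀ hμ.ne']
    linarith
  · rw [D.gradient_testFun hγ, real_inner_smul_left]
    exact mul_pos (inv_pos.2 hμ) (hinner hx)

lemma le_supersolution (h : D.IsMaximizer Ω J γ ε u v x t y τ) (hγ : 0 < γ) (hε : 0 < ε)
    (hN : 0 < N) (hΩ : IsOpen Ω) (hM : AssumptionM1 Ω g Cμ σ) (hJ1 : AssumptionJ1 Ω j Cj' Cj Dj)
    (hv : IsParSuperSol Ω j g n Cj (fun x _ pt _ p I ↦ pt - I + H x p) v)
    (hτ : 0 < τ) (hξ : 0 < ξ) (hJ : closedBall τ ξ ⊆ J)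
    (hinner : y ∈ frontier Ω →
      ⟪ε⁻¹ • smoothNormGrad γ (x - y) - D.η • gradient D.ζ y, n y⟫ < 0) :
    D.δ ≤ 2 * (t - τ) / ε - Iout Ω j g ξ (fun z ↦ v z τ) y
      + H y (ε⁻¹ • smoothNormGrad γ (x - y) - D.η • gradient D.ζ y)
      + (1 / ε + D.η * D.L) * Cj * Cμ * ∫ z in ball (0 : Euc N) ξ, jumpWeight N σ z := by
  have hη := D.η_pos
  have hgrad : gradient (fun y ↦ D.testFun γ ε (-1) (x, t) y τ) y =
      ε⁻¹ • smoothNormGrad γ (x - y) - D.η • gradient D.ζ y := by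
    rw [D.gradient_testFun hγ, ← neg_sub x y, smoothNormGrad_neg]
    module
  have hineq := hv.zero_le_of_inner_neg hΩ hξ
    (D.contDiff_testFun (ε := ε) (c := -1) (w := (x, t)) hγ) h.right_mem hτ
    (fun y' hy' s hs ↦ ?_) (fun hy ↦ ?_)
  · have hIin := hM.abs_Iin_le (ξ := ξ) hJ1 hN (by positivity) h.right_mem
      (fun y' ↦ D.abs_testFun_sub_le (γ := γ) (c := -1) (t := τ) (w := (x, t)) hε y')
    rw [abs_neg, abs_one, one_mul] at hIin
    rw [D.deriv_testFun, hgrad, neg_one_mul, neg_add, ← neg_div, ← mul_neg, neg_sub] at hineq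
    linarith [(neg_le_abs _).trans hIin]
  · have hmax := isMaxOn_iff.1 h.isMaxOn ((x, t), (y', s))
      ⟨⟨h.left_mem, h.left_time_mem⟩, hy', hJ hs⟩
    simp only [gain] at hmax
    simp only [testFun, ← doublingPenalty_swap (_, (x, t)), Prod.swap_prod_mk]
    linarith
  · rw [hgrad]
    exact hinner hy

end DoublingParams.IsMaximizer

end Maximum

section KeyEstimate

variable {Ω : Set (Euc N)} {g : Euc N → Euc N → ℝ} {j : Euc N → Euc N → Euc N}
  {n : Euc N → Euc N} {H : Euc N → Euc N → ℝ} {Cμ Dμ σ Aj Cj' Cj Dj γ ε : ℝ}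
  {u v : Euc N → ℝ → ℝ} {D : DoublingParams N} {J : Set ℝ} {x y : Euc N} {t τ : ℝ}

/-- The standing assumptions on the domain, its normal and the censored operator. -/
structure CensoredSetting (hN : 0 < N) (Ω : Set (Euc N)) (n : Euc N → Euc N)
    (g : Euc N → Euc N → ℝ) (Cμ Dμ σ : ℝ) (j : Euc N → Euc N → Euc N)
    (Aj Cj' Cj Dj : ℝ) : Prop where
  isW2Domain : IsW2Domain hN Ω
  isBounded : Bornology.IsBounded Ω
  isExteriorNormal : IsExteriorNormal Ω n
  assumptionM : AssumptionM Ω g Cμ Dμ σ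
  assumptionJ0 : AssumptionJ0 Ω j Aj
  assumptionJ1 : AssumptionJ1 Ω j Cj' Cj Dj

/-- A bounded upper semicontinuous subsolution `u` and a bounded lower semicontinuous
supersolution `v` of `∂ₜw - I[w] + H(x, Dw) = 0`. -/
structure IsSubSuperPair (Ω : Set (Euc N)) (j : Euc N → Euc N → Euc N)
    (g : Euc N → Euc N → ℝ) (n : Euc N → Euc N) (Cj : ℝ) (H : Euc N → Euc N → ℝ)
    (u v : Euc N → ℝ → ℝ) : Prop where
  bddOnT_sub : BddOnT u (closure Ω) (Ici 0)
  upperSemicontinuousOn :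
    UpperSemicontinuousOn (fun q : Euc N × ℝ ↦ u q.1 q.2) (closure Ω ×ˢ Ici 0)
  isParSubSol : IsParSubSol Ω j g n Cj (fun x _ pt _ p I ↦ pt - I + H x p) u
  bddOnT_super : BddOnT v (closure Ω) (Ici 0)
  lowerSemicontinuousOn :
    LowerSemicontinuousOn (fun q : Euc N × ℝ ↦ v q.1 q.2) (closure Ω ×ˢ Ici 0)
  isParSuperSol : IsParSuperSol Ω j g n Cj (fun x _ pt _ p I ↦ pt - I + H x p) v

lemma IsSubSuperPair.Iout_sub_Iout_le {ξ : ℝ} (huv : IsSubSuperPair Ω j g n Cj H u v) {hN : 0 < N}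
    (hS : CensoredSetting hN Ω n g Cμ Dμ σ j Aj Cj' Cj Dj)
    (h : D.IsMaximizer Ω J γ ε u v x t y τ) (hε : 0 < ε) (ht : 0 ≤ t) (hτ : 0 ≤ τ) {R : ℝ}
    (hR : ∀ x ∈ closure Ω, jumpSet Ω j x ⊆ ball 0 R) (hξ : 0 < ξ) :
    D.μ * Iout Ω j g ξ (fun z ↦ u z t) x - Iout Ω j g ξ (fun z ↦ v z τ) y ≤
      ((1 / ε * (Dj * ‖x - y‖) + 2 * (D.η * D.L) * Cj) * Cμ
        + (1 / ε + D.η * D.L) * Cj * (Dμ * ‖x - y‖)) * (∫ z in ball (0 : Euc N) R, jumpWeight N σ z)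
      + (1 / ε + D.η * D.L) * Cj * Cμ * jumpDefect Ω j σ x y := by
  obtain ⟨Bu, hBu⟩ := huv.bddOnT_sub
  obtain ⟨Bv, hBv⟩ := huv.bddOnT_super
  have hμ := D.μ_pos
  have hη := D.η_pos
  have hμu : BddOn (fun z ↦ D.μ * u z t) (closure Ω) := ⟨D.μ * Bu, fun z hz ↦ by
    rw [abs_mul, abs_of_pos hμ]
    exact mul_le_mul_of_nonneg_left (hBu z hz t ht) hμ.le⟩
  have hv : BddOn (fun z ↦ v z τ) (closure Ω) := ⟨Bv, fun z hz ↦ hBv z hz τ hτ⟩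
  rw [← Iout_const_mul]
  exact hS.assumptionM.Iout_sub_Iout_le hS.assumptionJ0 hS.assumptionJ1 hN hS.isBounded hμu
    ((measurable_domRestrict_slice_of_upperSemicontinuousOn huv.upperSemicontinuousOn
      ht).const_mul D.μ) hv
    (measurable_domRestrict_slice_of_lowerSemicontinuousOn huv.lowerSemicontinuousOn hτ)
    h.left_mem h.right_mem (by positivity) (by positivity)
    (fun x' hx' y' hy' ↦ h.increment_le hε hx' hy') hR hξ

/-- The time derivatives of the two test functions cancel, up to the slopes `δ`. -/
lemma DoublingParams.IsMaximizer.two_mul_slope_le (h : D.IsMaximizer Ω J γ ε u v x t y τ)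
    {hN : 0 < N} (hS : CensoredSetting hN Ω n g Cμ Dμ σ j Aj Cj' Cj Dj)
    (huv : IsSubSuperPair Ω j g n Cj H u v) (hγ : 0 < γ) (hε : 0 < ε)
    (ht : 0 < t) (hτ : 0 < τ) (hJt : J ∈ 𝓝 t) (hJτ : J ∈ 𝓝 τ) {R : ℝ}
    (hR : ∀ x ∈ closure Ω, jumpSet Ω j x ⊆ ball 0 R)
    (hinner_left : x ∈ frontier Ω →
      0 < ⟪ε⁻¹ • smoothNormGrad γ (x - y) + D.η • gradient D.ζ x, n x⟫)
    (hinner_right : y ∈ frontier Ω →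
      ⟪ε⁻¹ • smoothNormGrad γ (x - y) - D.η • gradient D.ζ y, n y⟫ < 0) :
    2 * D.δ ≤
      ((1 / ε * (Dj * ‖x - y‖) + 2 * (D.η * D.L) * Cj) * Cμ
        + (1 / ε + D.η * D.L) * Cj * (Dμ * ‖x - y‖)) * (∫ z in ball (0 : Euc N) R, jumpWeight N σ z)
      + (1 / ε + D.η * D.L) * Cj * Cμ * jumpDefect Ω j σ x y
      + (H y (ε⁻¹ • smoothNormGrad γ (x - y) - D.η • gradient D.ζ y)
        - D.μ * H x (D.μ⁻¹ • (ε⁻¹ • smoothNormGrad γ (x - y) + D.η • gradient D.ζ x))) := by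
  refine le_of_forall_pos_le_add fun e he ↦ ?_
  have hlim : Tendsto (fun ξ ↦ 2 * ((1 / ε + D.η * D.L) * Cj * Cμ *
      ∫ z in ball (0 : Euc N) ξ, jumpWeight N σ z)) (𝓝[>] 0) (𝓝 0) := by
    simpa using ((tendsto_setIntegral_jumpWeight_ball hN hS.assumptionM.1.2.1.2).const_mul
      ((1 / ε + D.η * D.L) * Cj * Cμ)).const_mul 2
  obtain ⟨ξ, hξe, hξ, hξt, hξτ⟩ := ((hlim.eventually_lt_const he).and <|
    eventually_mem_nhdsWithin.and <| nhdsWithin_le_nhds <|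
      (eventually_closedBall_subset hJt).and (eventually_closedBall_subset hJτ)).exists
  have hleft := h.subsolution_le hγ hε hN hS.isW2Domain.1 hS.assumptionM.1 hS.assumptionJ1
    huv.isParSubSol ht hξ hξt hinner_left
  have hright := h.le_supersolution hγ hε hN hS.isW2Domain.1 hS.assumptionM.1 hS.assumptionJ1
    huv.isParSuperSol hτ hξ hξτ hinner_right
  linarith [huv.Iout_sub_Iout_le hS h hε ht.le hτ.le hR hξ]

/-- The corrector `ζ`, whose gradient on the boundary is `n`, beats the `O(‖x - y‖ ^ 2 / ε)` by
which the penalty may point inwards. -/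
lemma DoublingParams.inner_pos (hζ : HasGradientAt D.ζ (n x) x) (hn : ‖n x‖ = 1) {C : ℝ≥0}
    (hquad : -(C * ‖x - y‖ ^ 2) ≤ ⟪x - y, n x⟫) (hε : 0 < ε) (hsmall : C * (‖x - y‖ / ε) < D.η) :
    0 < ⟪ε⁻¹ • smoothNormGrad γ (x - y) + D.η • gradient D.ζ x, n x⟫ := by
  have hgrad : -(C * (‖x - y‖ / ε)) ≤ ε⁻¹ * ⟪smoothNormGrad γ (x - y), n x⟫ := by
    calc -(C * (‖x - y‖ / ε)) = ε⁻¹ * -(C * ‖x - y‖) := by ring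
      _ ≤ _ := by gcongr; exact neg_mul_norm_le_inner_smoothNormGrad C.2 hquad
  rw [inner_add_left, real_inner_smul_left, real_inner_smul_left, hζ.gradient,
    real_inner_self_eq_norm_sq, hn]
  linarith

lemma DoublingParams.inner_neg (hζ : HasGradientAt D.ζ (n y) y) (hn : ‖n y‖ = 1) {C : ℝ≥0}
    (hquad : -(C * ‖x - y‖ ^ 2) ≤ ⟪y - x, n y⟫) (hε : 0 < ε) (hsmall : C * (‖x - y‖ / ε) < D.η) :
    ⟪ε⁻¹ • smoothNormGrad γ (x - y) - D.η • gradient D.ζ y, n y⟫ < 0 := by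
  rw [norm_sub_rev] at hquad hsmall
  rw [← neg_sub y x, smoothNormGrad_neg, smul_neg, ← neg_add', inner_neg_left]
  exact neg_neg_of_pos (inner_pos hζ hn hquad hε hsmall)

/-- Close points are handled by the smallness of `s`; for distant ones `1 / ε` is comparable to
the penalty gradient. -/
lemma mul_le_of_smoothNormGrad {E : Type*} [NormedAddCommGroup E] [InnerProductSpace ℝ E]
    {h : E} {b s e : ℝ} (hγ : 0 < γ) (hε : 0 < ε) (hε_le : ε ≤ 1) (hb : 0 ≤ b) (hb_le : b ≤ 1)
    (he : 0 ≤ e) (hnear : ‖h‖ < γ → s ≤ ε ^ 2) (hs : s ≤ e) :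
    (1 / ε + b) * s ≤ 2 * ε + 2 * e * (1 + ‖ε⁻¹ • smoothNormGrad γ h‖) := by
  rcases lt_or_ge ‖h‖ γ with hlt | hge
  · calc (1 / ε + b) * s ≤ (1 / ε + b) * ε ^ 2 := by gcongr; exact hnear hlt
      _ = ε + b * ε * ε := by field_simp
      _ ≤ ε + 1 * 1 * ε := by gcongr
      _ ≤ _ := by rw [one_mul, one_mul, two_mul]; exact le_add_of_nonneg_right (by positivity)
  · have hinv : 1 / ε ≤ 2 * ‖ε⁻¹ • smoothNormGrad γ h‖ := by
      rw [norm_smul, norm_inv, Real.norm_of_nonneg hε.le, one_div, mul_left_comm]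
      exact le_mul_of_one_le_right (by positivity) (one_le_two_mul_norm_smoothNormGrad hγ hge)
    calc (1 / ε + b) * s ≤ (1 / ε + b) * e := by gcongr
      _ ≤ (2 * ‖ε⁻¹ • smoothNormGrad γ h‖ + 1) * e := by gcongr
      _ ≤ _ := by nlinarith [norm_nonneg (ε⁻¹ • smoothNormGrad γ h)]

end KeyEstimate

section Exclusion

variable {Ω : Set (Euc N)} {g : Euc N → Euc N → ℝ} {j : Euc N → Euc N → Euc N}
  {n : Euc N → Euc N} {H : Euc N → Euc N → ℝ} {Cμ Dμ σ Aj Cj' Cj Dj γ ε : ℝ}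
  {u v : Euc N → ℝ → ℝ} {D : DoublingParams N} {J : Set ℝ} {x y : Euc N} {t τ : ℝ}

lemma DoublingParams.IsMaximizer.slope_add_le (h : D.IsMaximizer Ω J γ ε u v x t y τ)
    {hN : 0 < N} (hS : CensoredSetting hN Ω n g Cμ Dμ σ j Aj Cj' Cj Dj)
    (huv : IsSubSuperPair Ω j g n Cj H u v) (hγ : 0 < γ) (hε : 0 < ε) (hε_le : ε ≤ 1)
    (ht : 0 < t) (hτ : 0 < τ) (hJt : J ∈ 𝓝 t) (hJτ : J ∈ 𝓝 τ) {R : ℝ}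
    (hR : ∀ x ∈ closure Ω, jumpSet Ω j x ⊆ ball 0 R)
    (hζ : ∀ x ∈ frontier Ω, HasGradientAt D.ζ (n x) x) {C : ℝ≥0} {r : ℝ}
    (hquad : ∀ x ∈ frontier Ω, ∀ y, dist x y < r → y ∈ closure Ω →
      -(C * ‖x - y‖ ^ 2) ≤ ⟪x - y, n x⟫)
    (hxyr : ‖x - y‖ < r) (hCxy : C * (‖x - y‖ / ε) < D.η)
    (hηL : D.η * D.L ≤ 1) {c d : ℝ} (hxy : ‖x - y‖ < d)
    (hgap : ∀ x y P p q : Euc N, ‖x - y‖ < d → ‖p - P‖ ≤ D.η * D.L → ‖q - P‖ ≤ D.η * D.L →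
      H y q - D.μ * H x (D.μ⁻¹ • p) ≤ D.δ - c * (1 + ‖P‖)) :
    D.δ + c * (1 + ‖ε⁻¹ • smoothNormGrad γ (x - y)‖) ≤
      ‖x - y‖ / ε * ((Dj * Cμ + 2 * Cj * Dμ) * ∫ z in ball (0 : Euc N) R, jumpWeight N σ z)
      + D.η * D.L * (2 * Cj * Cμ * ∫ z in ball (0 : Euc N) R, jumpWeight N σ z)
      + Cj * Cμ * ((1 / ε + D.η * D.L) * jumpDefect Ω j σ x y) := by
  have hmain := h.two_mul_slope_le hS huv hγ hε ht hτ hJt hJτ hR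
    (fun hx ↦ D.inner_pos (hζ x hx) (hS.isExteriorNormal x hx).1
      (hquad x hx y (by rwa [dist_eq_norm]) h.right_mem) hε hCxy)
    (fun hy ↦ D.inner_neg (hζ y hy) (hS.isExteriorNormal y hy).1
      (norm_sub_rev x y ▸ hquad y hy x (by rwa [dist_comm, dist_eq_norm]) h.left_mem) hε hCxy)
  have hcorr (z : Euc N) : ‖D.η • gradient D.ζ z‖ ≤ D.η * D.L := by
    rw [norm_smul, Real.norm_of_nonneg D.η_pos.le]
    exact mul_le_mul_of_nonneg_left (D.norm_gradient_ζ_le z) D.η_pos.le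
  have hH := hgap x y (ε⁻¹ • smoothNormGrad γ (x - y))
    (ε⁻¹ • smoothNormGrad γ (x - y) + D.η • gradient D.ζ x)
    (ε⁻¹ • smoothNormGrad γ (x - y) - D.η • gradient D.ζ y) hxy
    (by rw [add_sub_cancel_left]; exact hcorr x)
    (by rw [sub_sub_cancel_left, norm_neg]; exact hcorr y)
  have hW : 0 ≤ ∫ z in ball (0 : Euc N) R, jumpWeight N σ z :=
    integral_nonneg fun z ↦ jumpWeight_nonneg σ z
  have hCj := hS.assumptionJ1.2.1
  have hDμ := hS.assumptionM.2.1
  have hηL_xy : D.η * D.L * ‖x - y‖ ≤ ‖x - y‖ / ε :=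
    (mul_le_of_le_one_left (norm_nonneg _) hηL).trans
      (le_div_self (norm_nonneg _) hε hε_le)
  have herr := mul_le_mul_of_nonneg_right hηL_xy (mul_nonneg (mul_pos hCj hDμ).le hW)
  rw [div_eq_mul_one_div] at herr ⊢
  linarith

/-- The smallness conditions on the parameters under which the doubled maximum contradicts the
equations; `K` is the constant in front of the corrector in the nonlocal estimate. -/
structure DoublingParams.IsAdmissible (D : DoublingParams N) (Ω : Set (Euc N))
    (n : Euc N → Euc N) (H : Euc N → Euc N → ℝ) (K : ℝ) : Prop where
  hasGradientAt_ζ : ∀ x ∈ frontier Ω, HasGradientAt D.ζ (n x) x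
  δ_pos : 0 < D.δ
  hasCoercivityGap : HasCoercivityGap H D.μ D.δ (D.η * D.L)
  η_mul_L_le_one : D.η * D.L ≤ 1
  η_mul_L_mul_lt : D.η * D.L * K < D.δ / 2

lemma CensoredSetting.exists_not_isMaximizer {hN : 0 < N}
    (hS : CensoredSetting hN Ω n g Cμ Dμ σ j Aj Cj' Cj Dj)
    (huv : IsSubSuperPair Ω j g n Cj H u v) :
    ∃ K, ∀ D : DoublingParams N, D.IsAdmissible Ω n H K → ∃ κ > 0,
      ∀ {ε γ : ℝ} {x y : Euc N} {J : Set ℝ} {t τ : ℝ}, 0 < γ → 0 < ε → ε < κ →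
        ‖x - y‖ / ε < κ → (‖x - y‖ < γ → jumpDefect Ω j σ x y ≤ ε ^ 2) →
        0 < t → 0 < τ → J ∈ 𝓝 t → J ∈ 𝓝 τ → ¬ D.IsMaximizer Ω J γ ε u v x t y τ := by
  obtain ⟨R, hR⟩ := hS.assumptionJ1.exists_jumpSet_subset_ball hS.isBounded
  obtain ⟨C, r, hr, hquad⟩ :=
    hS.isExteriorNormal.exists_neg_mul_norm_sq_le_inner hS.isW2Domain hS.isBounded
  have hCj := hS.assumptionJ1.2.1
  have hCμ := hS.assumptionM.1.1
  set W := ∫ z in ball (0 : Euc N) R, jumpWeight N σ z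
  refine ⟨2 * Cj * Cμ * W, fun D ⟨hζ, hδ, ⟨c, hc, d, hd, hgap⟩, hηL, hηK⟩ ↦ ?_⟩
  obtain ⟨e, he, hce⟩ : ∃ e > 0, Cj * Cμ * (2 * e) = c :=
    ⟨c / (2 * Cj * Cμ), by positivity, by field_simp⟩
  obtain ⟨r', hr', hdefect⟩ := hS.assumptionJ1.exists_jumpDefect_le hS.assumptionJ0
    hS.isW2Domain hS.isBounded hS.assumptionM.1.2.1.2 he
  obtain ⟨κ, hκC, hκW, hκ, ⟨hκr, hκd⟩, hκr', hκ1⟩ :=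
    ((eventually_mul_lt_nhdsGT_zero C D.η_pos).and <| (eventually_mul_lt_nhdsGT_zero
      ((Dj * Cμ + 2 * Cj * Dμ) * W + 2 * (Cj * Cμ)) (half_pos hδ)).and <|
      eventually_mem_nhdsWithin.and <| nhdsWithin_le_nhds <|
      ((eventually_lt_nhds hr).and (eventually_lt_nhds hd)).and <|
      (eventually_lt_nhds hr').and (eventually_lt_nhds one_pos)).exists
  refine ⟨κ, hκ, fun {ε γ x y J t τ} hγ hε hεκ hxyε hnear ht hτ hJt hJτ h ↦ ?_⟩
  have hxy : ‖x - y‖ < κ :=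
    (le_div_self (norm_nonneg _) hε (hεκ.trans hκ1).le).trans_lt hxyε
  have hstrict := h.slope_add_le hS huv hγ hε (hεκ.trans hκ1).le ht hτ hJt hJτ hR hζ hquad
    (hxy.trans hκr) ((mul_le_mul_of_nonneg_left hxyε.le C.2).trans_lt hκC) hηL (hxy.trans hκd) hgap
  have hη := D.η_pos
  have hjump := mul_le_mul_of_nonneg_left (mul_le_of_smoothNormGrad hγ hε (hεκ.trans hκ1).le
    (by positivity) hηL he.le hnear (hdefect x h.left_mem y h.right_mem (hxy.trans hκr')))
    (mul_pos hCj hCμ).le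
  have hW : 0 ≤ W := integral_nonneg fun z ↦ jumpWeight_nonneg σ z
  have hDj := hS.assumptionJ1.2.2.1
  have hDμ := hS.assumptionM.2.1
  have hxyW := mul_le_mul_of_nonneg_right hxyε.le
    (show 0 ≤ (Dj * Cμ + 2 * Cj * Dμ) * W by positivity)
  have hεW := mul_le_mul_of_nonneg_right hεκ.le (mul_pos hCj hCμ).le
  rw [← hce] at hstrict
  linarith

end Exclusion

section Comparison

variable {Ω : Set (Euc N)} {g : Euc N → Euc N → ℝ} {j : Euc N → Euc N → Euc N}
  {n : Euc N → Euc N} {H : Euc N → Euc N → ℝ} {Cj s₀ T : ℝ}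
  {u v : Euc N → ℝ → ℝ} {D : DoublingParams N}

lemma IsSubSuperPair.upperSemicontinuousOn_gain (huv : IsSubSuperPair Ω j g n Cj H u v)
    (D : DoublingParams N) :
    UpperSemicontinuousOn (D.gain u v) ((closure Ω ×ˢ Ici 0) ×ˢ (closure Ω ×ˢ Ici 0)) := by
  have hμu : UpperSemicontinuousOn (fun q : (Euc N × ℝ) × (Euc N × ℝ) ↦ D.μ * u q.1.1 q.1.2)
      ((closure Ω ×ˢ Ici 0) ×ˢ (closure Ω ×ˢ Ici 0)) :=
    (continuous_const_mul D.μ).comp_upperSemicontinuousOn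
      (huv.upperSemicontinuousOn.comp continuousOn_fst fun q hq ↦ hq.1)
      (monotone_mul_left_of_nonneg D.μ_pos.le)
  have hv : UpperSemicontinuousOn (fun q : (Euc N × ℝ) × (Euc N × ℝ) ↦ -v q.2.1 q.2.2)
      ((closure Ω ×ˢ Ici 0) ×ˢ (closure Ω ×ˢ Ici 0)) :=
    continuous_neg.comp_lowerSemicontinuousOn_antitone
      (huv.lowerSemicontinuousOn.comp continuousOn_snd fun q hq ↦ hq.2) fun _ _ ↦ neg_le_neg
  have hζ := D.contDiff_ζ.continuous
  have hcont : Continuous fun q : (Euc N × ℝ) × (Euc N × ℝ) ↦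
      -(D.η * (D.ζ q.1.1 + D.ζ q.2.1) + D.δ * (q.1.2 + q.2.2)) := by fun_prop
  have hgain : D.gain u v = fun q ↦ D.μ * u q.1.1 q.1.2 + -v q.2.1 q.2.2 +
      -(D.η * (D.ζ q.1.1 + D.ζ q.2.1) + D.δ * (q.1.2 + q.2.2)) := by
    funext q
    simp only [DoublingParams.gain]
    ring
  exact hgain ▸ (hμu.add hv).add hcont.continuousOn.upperSemicontinuousOn

lemma IsSubSuperPair.exists_frequently_isMaximizer (huv : IsSubSuperPair Ω j g n Cj H u v)
    (hbdd : Bornology.IsBounded Ω) (hs₀ : 0 ≤ s₀) {γ : ℝ → ℝ} (hγ : ∀ ε > 0, 0 < γ ε)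
    (hγε : ∀ ε > 0, γ ε ≤ ε) (hγε_sq : ∀ ε > 0, γ ε ≤ ε ^ 2) {x₀ : Euc N} (hx₀ : x₀ ∈ closure Ω)
    {t₀ : ℝ} (ht₀ : t₀ ∈ Icc s₀ T) :
    ∃ x ∈ closure Ω, ∃ t ∈ Icc s₀ T,
      D.gain u v ((x₀, t₀), (x₀, t₀)) ≤ D.gain u v ((x, t), (x, t)) ∧
      ∀ I ∈ 𝓝 t, ∀ κ > 0, ∃ ε > 0, ε < κ ∧ ∃ y s z τ, s ∈ I ∧ τ ∈ I ∧ ‖y - z‖ / ε < κ ∧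
        D.IsMaximizer Ω (Icc s₀ T) (γ ε) ε u v y s z τ := by
  have hcompact : IsCompact (closure Ω ×ˢ Icc s₀ T) := hbdd.isCompact_closure.prod isCompact_Icc
  have hsub : closure Ω ×ˢ Icc s₀ T ⊆ closure Ω ×ˢ Ici 0 :=
    prod_mono_right fun t ht ↦ hs₀.trans ht.1
  obtain ⟨⟨⟨x, t⟩, q⟩, ⟨ha, -⟩, hdiag, hgain, hfreq⟩ := exists_penalized_maximizer
    (hcompact.prod hcompact) ((huv.upperSemicontinuousOn_gain D).mono (prod_mono hsub hsub))
    (D := fun q ↦ ‖q.1.1 - q.2.1‖ + (q.1.2 - q.2.2) ^ 2)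
    (pen := fun ε ↦ doublingPenalty (γ ε) ε) (by fun_prop) (fun q _ ↦ by positivity)
    (fun ε hε ↦ (contDiff_doublingPenalty (hγ ε hε)).continuous.continuousOn)
    (fun ε hε q _ ↦ doublingPenalty_nonneg hε.le q)
    (fun ε hε q _ hq ↦ doublingPenalty_eq_zero (hγ ε hε) ((norm_sub_add_sq_eq_zero_iff q).1 hq))
    (fun ε hε q _ ↦ norm_sub_add_sq_le_mul_doublingPenalty hε (hγε ε hε) q)
    (q₀ := ((x₀, t₀), (x₀, t₀))) ⟨⟨hx₀, ht₀⟩, hx₀, ht₀⟩ (by simp)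
  obtain rfl : (x, t) = q := (norm_sub_add_sq_eq_zero_iff _).1 hdiag
  refine ⟨x, ha.1, t, ha.2, hgain, fun I hI κ hκ ↦ ?_⟩
  have hU : (univ ×ˢ I) ×ˢ (univ ×ˢ I) ∈ 𝓝 ((x, t), (x, t)) :=
    prod_mem_nhds (prod_mem_nhds univ_mem hI) (prod_mem_nhds univ_mem hI)
  obtain ⟨ε, ⟨⟨⟨y, s⟩, z, τ⟩, ⟨⟨⟨hy, hs⟩, hz, hτ⟩, ⟨-, hsI⟩, -, hτI⟩, hmax, hpen⟩, hε, hεκ⟩ :=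
    ((hfreq _ hU (κ / 2) (half_pos hκ)).and_eventually (Ioo_mem_nhdsGT (half_pos hκ))).exists
  refine ⟨ε, hε, hεκ.trans (half_lt_self hκ), y, s, z, τ, hsI, hτI, ?_, hy, hs, hz, hτ, hmax⟩
  linarith [norm_sub_div_le_doublingPenalty_add hε (hγε_sq ε hε) ((y, s), (z, τ))]

end Comparison

section Monotonicity

variable {Ω : Set (Euc N)} {g : Euc N → Euc N → ℝ} {j : Euc N → Euc N → Euc N}
  {n : Euc N → Euc N} {H : Euc N → Euc N → ℝ} {Cμ Dμ σ Aj Cj' Cj Dj : ℝ}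
  {u v : Euc N → ℝ → ℝ} {D : DoublingParams N}

lemma AssumptionJ1.exists_scale {hN : 0 < N} (hJ1 : AssumptionJ1 Ω j Cj' Cj Dj)
    (hJ0 : AssumptionJ0 Ω j Aj) (hΩ : IsW2Domain hN Ω) (hbdd : Bornology.IsBounded Ω)
    (hσ : σ < 1) :
    ∃ γ : ℝ → ℝ, ∀ ε > 0, 0 < γ ε ∧ γ ε ≤ ε ∧ γ ε ≤ ε ^ 2 ∧
      ∀ x ∈ closure Ω, ∀ y ∈ closure Ω, ‖x - y‖ < γ ε → jumpDefect Ω j σ x y ≤ ε ^ 2 := by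
  have hscale : ∀ ε > 0, ∃ γ, 0 < γ ∧ γ ≤ ε ∧ γ ≤ ε ^ 2 ∧
      ∀ x ∈ closure Ω, ∀ y ∈ closure Ω, ‖x - y‖ < γ → jumpDefect Ω j σ x y ≤ ε ^ 2 := by
    intro ε hε
    obtain ⟨r, hr, hdefect⟩ := hJ1.exists_jumpDefect_le hJ0 hΩ hbdd hσ (pow_pos hε 2)
    exact ⟨min r (min ε (ε ^ 2)), by positivity, (min_le_right _ _).trans (min_le_left _ _),
      (min_le_right _ _).trans (min_le_right _ _),
      fun x hx y hy hxy ↦ hdefect x hx y hy (hxy.trans_le (min_le_left _ _))⟩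
  choose! γ hγ using hscale
  exact ⟨γ, hγ⟩

lemma CensoredSetting.exists_gain_le_endpoint {hN : 0 < N}
    (hS : CensoredSetting hN Ω n g Cμ Dμ σ j Aj Cj' Cj Dj)
    (huv : IsSubSuperPair Ω j g n Cj H u v) :
    ∃ K, ∀ D : DoublingParams N, D.IsAdmissible Ω n H K →
      ∀ {s₀ T : ℝ}, 0 ≤ s₀ → ∀ x₀ ∈ closure Ω, ∀ t₀ ∈ Icc s₀ T,
        ∃ x ∈ closure Ω, ∃ t, (t = s₀ ∨ t = T) ∧
          D.gain u v ((x₀, t₀), (x₀, t₀)) ≤ D.gain u v ((x, t), (x, t)) := by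
  obtain ⟨K, hK⟩ := hS.exists_not_isMaximizer huv
  refine ⟨K, fun D hD s₀ T hs₀ x₀ hx₀ t₀ ht₀ ↦ ?_⟩
  obtain ⟨κ, hκ, hnot⟩ := hK D hD
  obtain ⟨γ, hγ⟩ := hS.assumptionJ1.exists_scale hS.assumptionJ0 hS.isW2Domain hS.isBounded
    hS.assumptionM.1.2.1.2
  obtain ⟨x, hx, t, ht, hgain, hnear⟩ := huv.exists_frequently_isMaximizer (D := D) hS.isBounded hs₀
    (fun ε hε ↦ (hγ ε hε).1) (fun ε hε ↦ (hγ ε hε).2.1) (fun ε hε ↦ (hγ ε hε).2.2.1) hx₀ ht₀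
  refine ⟨x, hx, t, ?_, hgain⟩
  by_contra! hends
  have htI : Ioo s₀ T ∈ 𝓝 t := Ioo_mem_nhds (ht.1.lt_of_ne' hends.1) (ht.2.lt_of_ne hends.2)
  obtain ⟨ε, hε, hεκ, y, s, z, τ, hs, hτ, hyz, hmax⟩ := hnear _ htI κ hκ
  exact hnot (hγ ε hε).1 hε hεκ hyz ((hγ ε hε).2.2.2 y hmax.left_mem z hmax.right_mem)
    (hs₀.trans_lt hs.1) (hs₀.trans_lt hτ.1) (Icc_mem_nhds hs.1 hs.2) (Icc_mem_nhds hτ.1 hτ.2) hmax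

lemma DoublingParams.gain_self (D : DoublingParams N) (u v : Euc N → ℝ → ℝ) (x : Euc N) (t : ℝ) :
    D.gain u v ((x, t), (x, t)) =
      D.μ * u x t - v x t - 2 * (D.η * D.ζ x) - 2 * (D.δ * t) := by
  rw [gain]
  ring

lemma IsSubSuperPair.exists_forall_gain_lt (huv : IsSubSuperPair Ω j g n Cj H u v)
    (hδ : 0 < D.δ) {e : ℝ} (hζ : ∀ x, |D.η * D.ζ x| ≤ e) (s a : ℝ) :
    ∃ T ≥ s, ∀ x ∈ closure Ω, D.gain u v ((x, T), (x, T)) < a := by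
  obtain ⟨Bu, hBu⟩ := huv.bddOnT_sub
  obtain ⟨Bv, hBv⟩ := huv.bddOnT_super
  obtain ⟨T, hTa, hTs, hT⟩ := (((tendsto_id.const_mul_atTop hδ).eventually_gt_atTop
    ((D.μ * Bu + Bv + 2 * e - a) / 2)).and <|
      (eventually_ge_atTop s).and (eventually_ge_atTop 0)).exists
  refine ⟨T, hTs, fun x hx ↦ ?_⟩
  rw [D.gain_self]
  have hu := mul_le_mul_of_nonneg_left (abs_le.1 (hBu x hx T hT)).2 D.μ_pos.le
  rw [id] at hTa
  linarith [(abs_le.1 (hBv x hx T hT)).1, (abs_le.1 (hζ x)).1]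

lemma CensoredSetting.exists_isAdmissible {hN : 0 < N}
    (hS : CensoredSetting hN Ω n g Cμ Dμ σ j Aj Cj' Cj Dj) {m A Cb C : ℝ} {ω₁ : ℝ → ℝ}
    (hHb : AssumptionHb H m A Cb) (hHc : AssumptionHc H m C ω₁) (K : ℝ) {δ e : ℝ} (hδ : 0 < δ)
    (he : 0 < e) :
    ∃ D : DoublingParams N, D.IsAdmissible Ω n H K ∧ D.δ = δ ∧ |D.μ - 1| ≤ e ∧
      ∀ x, |D.η * D.ζ x| ≤ e := by
  obtain ⟨μ, ⟨l, hl, hgap⟩, hμ_pos, hμ_close⟩ :=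
    ((eventually_exists_hasCoercivityGap hHb hHc hδ).and <| nhdsWithin_le_nhds <|
      (eventually_gt_nhds one_pos).and (closedBall_mem_nhds (1 : ℝ) he)).exists
  obtain ⟨ζ, hζ, hsupp, hζn⟩ :=
    hS.isExteriorNormal.exists_contDiff_hasGradientAt hS.isW2Domain hS.isBounded
  obtain ⟨L, hL⟩ := hζ.lipschitzWith_of_hasCompactSupport hsupp one_ne_zero
  obtain ⟨Z, hZ⟩ := hsupp.exists_bound_of_continuous hζ.continuous
  obtain ⟨η, hηl, hη1, hηK, hηZ, hη⟩ := ((eventually_mul_lt_nhdsGT_zero L hl).and <|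
    (eventually_mul_lt_nhdsGT_zero L one_pos).and <|
    (eventually_mul_lt_nhdsGT_zero (L * K) (half_pos hδ)).and <|
    (eventually_mul_lt_nhdsGT_zero Z he).and eventually_mem_nhdsWithin).exists
  rw [mul_comm] at hηl hη1 hηZ
  refine ⟨⟨μ, η, δ, ζ, L, hμ_pos, hη, hζ, hL⟩, ⟨hζn, hδ, hgap.mono hηl.le, hη1.le, ?_⟩, rfl,
    by rwa [← Real.dist_eq], fun x ↦ ?_⟩
  · rwa [mul_assoc, mul_comm]
  · rw [abs_mul, abs_of_pos hη]
    exact (mul_le_mul_of_nonneg_left (hZ x) (le_of_lt hη)).trans hηZ.le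

lemma CensoredSetting.exists_sub_le_add {hN : 0 < N}
    (hS : CensoredSetting hN Ω n g Cμ Dμ σ j Aj Cj' Cj Dj) {m A Cb C : ℝ} {ω₁ : ℝ → ℝ}
    (hHb : AssumptionHb H m A Cb) (hHc : AssumptionHc H m C ω₁)
    (huv : IsSubSuperPair Ω j g n Cj H u v) {s t : ℝ} (hs : 0 ≤ s) (hst : s ≤ t) {x₀ : Euc N}
    (hx₀ : x₀ ∈ closure Ω) {e : ℝ} (he : 0 < e) :
    ∃ x ∈ closure Ω, u x₀ t - v x₀ t ≤ u x s - v x s + e := by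
  obtain ⟨B, hB⟩ := huv.bddOnT_sub
  have hB_nonneg : 0 ≤ B := (abs_nonneg _).trans (hB x₀ hx₀ s hs)
  obtain ⟨K, hK⟩ := hS.exists_gain_le_endpoint huv
  have hts := sub_nonneg.2 hst
  obtain ⟨δ, hδ, hδe⟩ : ∃ δ > 0, 2 * (δ * (t - s)) ≤ e / 2 :=
    ⟨e / (4 * (t - s + 1)), by positivity, by field_simp; linarith⟩
  obtain ⟨r, hr, hre⟩ : ∃ r > 0, 2 * (r * B) + 4 * r = e / 2 :=
    ⟨e / (4 * (B + 2)), by positivity, by field_simp; ring⟩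
  obtain ⟨D, hD, rfl, hμ, hζ⟩ := hS.exists_isAdmissible hHb hHc K hδ hr
  obtain ⟨T, hT, hgainT⟩ := huv.exists_forall_gain_lt hδ hζ t (D.gain u v ((x₀, t), (x₀, t)))
  obtain ⟨x, hx, t', rfl | rfl, hgain⟩ := hK D hD hs x₀ hx₀ t ⟨hst, hT⟩
  · have hμu {x : Euc N} (hx : x ∈ closure Ω) {t : ℝ} (ht : 0 ≤ t) :
        |D.μ * u x t - u x t| ≤ r * B := by
      rw [← sub_one_mul, abs_mul]
      gcongr
      exact hB x hx t ht
    rw [D.gain_self, D.gain_self] at hgain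
    refine ⟨x, hx, ?_⟩
    linarith [(abs_le.1 (hμu hx₀ (hs.trans hst))).1, (abs_le.1 (hμu hx hs)).2,
      (abs_le.1 (hζ x₀)).2, (abs_le.1 (hζ x)).1]
  · exact absurd hgain (hgainT x hx).not_ge

theorem maximal_difference_monotone_general {hN : 0 < N}
    (hS : CensoredSetting hN Ω n g Cμ Dμ σ j Aj Cj' Cj Dj) {m A Cb C : ℝ} {ω₁ : ℝ → ℝ}
    (hHb : AssumptionHb H m A Cb) (hHc : AssumptionHc H m C ω₁)
    (huv : IsSubSuperPair Ω j g n Cj H u v) {s t : ℝ} (hs : 0 ≤ s) (hst : s ≤ t) :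
    sSup ((fun x ↦ u x t - v x t) '' closure Ω) ≤ sSup ((fun x ↦ u x s - v x s) '' closure Ω) := by
  rcases (closure Ω).eq_empty_or_nonempty with hempty | hne
  · simp only [hempty, image_empty, le_refl]
  obtain ⟨Bu, hBu⟩ := huv.bddOnT_sub
  obtain ⟨Bv, hBv⟩ := huv.bddOnT_super
  have hbdd : BddAbove ((fun x ↦ u x s - v x s) '' closure Ω) := by
    refine ⟨Bu + Bv, forall_mem_image.2 fun x hx ↦ ?_⟩
    linarith [(abs_le.1 (hBu x hx s hs)).2, (abs_le.1 (hBv x hx s hs)).1]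
  refine csSup_le (hne.image _) (forall_mem_image.2 fun x₀ hx₀ ↦ ?_)
  refine le_of_forall_pos_le_add fun e he ↦ ?_
  obtain ⟨x, hx, hle⟩ := hS.exists_sub_le_add hHb hHc huv hs hst hx₀ he
  exact hle.trans (add_le_add_left (le_csSup hbdd (mem_image_of_mem _ hx)) e)

end Monotonicity

/-- **Monotonicity of the maximal difference (Lemma `k`).**  Under the assumptions of
the Strong Maximum Principle, if `u, v` are bounded viscosity sub- and supersolutions of
`∂_t u - I[u(·,t)] + H(x,Du) = 0` in `Ω × (0,∞)` with generalized Neumann condition,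
then `k(t) = max_{closure Ω} (u(·,t) - v(·,t))` is nonincreasing: `k(t) ≤ k(s)` for
`0 ≤ s ≤ t`. -/
theorem maximal_difference_monotone
    (hN : 0 < N) (Ω : Set (Euc N)) (hΩ : IsW2Domain hN Ω)
    (hbdd : Bornology.IsBounded Ω)
    (n : Euc N → Euc N) (hn : IsExteriorNormal Ω n)
    (g : Euc N → Euc N → ℝ) (Cμ Dμ σ : ℝ) (hM : AssumptionM Ω g Cμ Dμ σ)
    (j : Euc N → Euc N → Euc N) (Aj : ℝ) (hJ0 : AssumptionJ0 Ω j Aj)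
    (Cj' Cj Dj : ℝ) (hJ1 : AssumptionJ1 Ω j Cj' Cj Dj)
    (H : Euc N → Euc N → ℝ) (m : ℝ) (hm : 1 < m)
    (hH1 : ∃ c₀ D, AssumptionH1 Ω H σ m c₀ D)
    (hHb : ∃ Ac Cb, AssumptionHb H m Ac Cb)
    (hHc : ∃ C ω₁, AssumptionHc H m C ω₁)
    (hE : AssumptionE Ω H)
    (hcov : CoveringProperty Ω j g)
    (u v : Euc N → ℝ → ℝ)
    (hub : BddOnT u (closure Ω) (Ici 0))
    (husc : UpperSemicontinuousOn (fun q : Euc N × ℝ => u q.1 q.2) (closure Ω ×ˢ Ici 0))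
    (hsub : IsParSubSol Ω j g n Cj (fun x _ pt r p I => pt - I + H x p) u)
    (hvb : BddOnT v (closure Ω) (Ici 0))
    (hlsc : LowerSemicontinuousOn (fun q : Euc N × ℝ => v q.1 q.2) (closure Ω ×ˢ Ici 0))
    (hsup : IsParSuperSol Ω j g n Cj (fun x _ pt r p I => pt - I + H x p) v) :
    ∀ s ∈ Ici (0:ℝ), ∀ t, s ≤ t →
      sSup ((fun x => u x t - v x t) '' closure Ω) ≤
        sSup ((fun x => u x s - v x s) '' closure Ω) := by
  obtain ⟨Ac, Cb, hHb⟩ := hHb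
  obtain ⟨C, ω₁, hHc⟩ := hHc
  exact fun s hs t hst ↦ maximal_difference_monotone_general ⟨hΩ, hbdd, hn, hM, hJ0, hJ1⟩ hHb hHc
    ⟨hub, husc, hsub, hvb, hlsc, hsup⟩ hs hst

end Censored

end
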